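/- arXiv:math/0010135 — 4 statements merged into one kernel-verified Lean document; each statement's English description precedes it below -/
import Mathlib

section
/- de Bruijn's identity: for integrable functions F_0,...,F_{2n-1} and G_0,...,G_{2n-1} on ℝ, (1/n!) ∫_{ℝ^n} det( F_i(y_1), G_i(y_1), ..., F_i(y_n), G_i(y_n) )_{0≤i≤2n-1} dy_1...dy_n = det^{1/2} ( ∫_ℝ (G_i(y)F_j(y) − F_i(y)G_j(y)) dy )_{0≤i,j≤2n-1}, i.e., the square of the left side equals the determinant of the 2n×2n skew-symmetric matrix of pairwise integrals. -/
open MeasureTheory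

namespace DeBruijn

open Equiv Matrix

/-- the index type -/
abbrev Idx (n : ℕ) := Fin n × Fin 2

/-- unnormalised Pfaffian sum -/
noncomputable def P {n : ℕ} (a : Matrix (Idx n) (Idx n) ℝ) : ℝ :=
  ∑ σ : Perm (Idx n), ((Perm.sign σ : ℤ) : ℝ) * ∏ k : Fin n, a (σ (k, 0)) (σ (k, 1))

/-- half of the standard form -/
def K (n : ℕ) : Matrix (Idx n) (Idx n) ℝ :=
  fun i j => if i.1 = j.1 ∧ i.2 = 0 ∧ j.2 = 1 then 1 else 0

lemma P_K (n : ℕ) : P (K n) = n.factorial := by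
  classical
  unfold P
  have h1 : ∀ τ : Perm (Fin n), ((Perm.sign (Equiv.prodCongr τ (Equiv.refl (Fin 2))) : ℤ) : ℝ) *
      ∏ k : Fin n, K n (Equiv.prodCongr τ (Equiv.refl (Fin 2)) (k, 0))
        (Equiv.prodCongr τ (Equiv.refl (Fin 2)) (k, 1)) = 1 := by
    intro τ
    have hs : Perm.sign (Equiv.prodCongr τ (Equiv.refl (Fin 2))) = 1 := by
      have : Equiv.prodCongr τ (Equiv.refl (Fin 2)) = Equiv.prodCongrLeft (fun _ : Fin 2 => τ) := by
        ext x <;> rfl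
      rw [this, Perm.sign_prodCongrLeft]
      simp [Int.units_mul_self]
    rw [hs]
    simp [K]
  have hinj : Function.Injective
      (fun τ : Perm (Fin n) => (Equiv.prodCongr τ (Equiv.refl (Fin 2)) : Perm (Idx n))) := by
    intro τ τ' h
    ext k
    have := congrArg (fun e : Perm (Idx n) => (e (k, 0)).1) h
    simpa using congrArg Fin.val this
  rw [← Finset.sum_subset (Finset.subset_univ (Finset.univ.image
    (fun τ : Perm (Fin n) => (Equiv.prodCongr τ (Equiv.refl (Fin 2)) : Perm (Idx n)))))]
  · rw [Finset.sum_image (fun x _ y _ h => hinj h)]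
    rw [Finset.sum_congr rfl (fun τ _ => h1 τ)]
    simp [Fintype.card_perm]
  · intro σ _ hσ
    by_contra hne
    apply hσ
    have hp := right_ne_zero_of_mul hne
    rw [Finset.prod_ne_zero_iff] at hp
    have hk : ∀ k, (σ (k,0)).1 = (σ (k,1)).1 ∧ (σ (k,0)).2 = 0 ∧ (σ (k,1)).2 = 1 := by
      intro k
      have := hp k (Finset.mem_univ _)
      by_contra hc
      exact this (by simp only [K, if_neg hc])
    have hi : Function.Injective (fun k => (σ (k,0)).1) := by
      intro k k' h
      have : σ (k,0) = σ (k',0) := Prod.ext h ((hk k).2.1.trans (hk k').2.1.symm)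
      exact congrArg Prod.fst (σ.injective this)
    rw [Finset.mem_image]
    refine ⟨Equiv.ofBijective _ (Finite.injective_iff_bijective.1 hi), Finset.mem_univ _, ?_⟩
    refine Equiv.ext ?_
    rintro ⟨k, b⟩
    fin_cases b
    · exact Prod.ext rfl (hk k).2.1.symm
    · exact Prod.ext (hk k).1 (hk k).2.2.symm

lemma P_skew {n : ℕ} (a : Matrix (Idx n) (Idx n) ℝ) :
    P (a - aᵀ) = (Fintype.card (Fin n → Perm (Fin 2)) : ℝ) * P a := by
  classical
  have h0 : ∀ (σ : Perm (Idx n)) (k : Fin n), (a - aᵀ) (σ (k,0)) (σ (k,1)) =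
      ∑ p : Perm (Fin 2), ((Perm.sign p : ℤ) : ℝ) * a (σ (k, p 0)) (σ (k, p 1)) := by
    intro σ k
    have : (Finset.univ : Finset (Perm (Fin 2))) = {1, Equiv.swap 0 1} := by decide
    rw [this, Finset.sum_pair (by decide)]
    simp [sub_eq_add_neg]
  unfold P
  simp_rw [h0, Finset.prod_univ_sum, Finset.mul_sum]
  rw [Finset.sum_comm]
  simp only [Fintype.piFinset_univ]
  rw [Finset.sum_congr rfl (g := fun _ => P a)]
  · simp [P, Finset.mul_sum]
  intro s _
  unfold P
  refine Fintype.sum_equiv (Equiv.mulRight (Equiv.prodCongrRight s)) _ _ ?_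
  intro σ
  simp only [Equiv.coe_mulRight, Perm.sign_mul, Perm.sign_prodCongrRight, Finset.prod_mul_distrib]
  push_cast
  simp [mul_assoc]

lemma mm_aux {n : ℕ} [DecidableEq (Idx n)] (a : Matrix (Idx n) (Idx n) ℝ)
    (v : Idx n → Idx n → ℝ) (k : Fin n) (b : Fin 2) (x : Idx n → ℝ) :
    ∏ k' : Fin n, Function.update v (k, b) x (k', 0) ⬝ᵥ a *ᵥ Function.update v (k, b) x (k', 1) =
    (if b = 0 then x ⬝ᵥ a *ᵥ v (k, 1) else v (k, 0) ⬝ᵥ a *ᵥ x) *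
      ∏ k' ∈ Finset.univ.erase k, v (k', 0) ⬝ᵥ a *ᵥ v (k', 1) := by
  rw [← Finset.mul_prod_erase _ _ (Finset.mem_univ k)]
  congr 1
  · fin_cases b <;> simp [Function.update_apply]
  · refine Finset.prod_congr rfl fun k' hk' => ?_
    have : k' ≠ k := Finset.ne_of_mem_erase hk'
    simp [Function.update_apply, this]

/-- the multilinear map -/
noncomputable def mm {n : ℕ} (a : Matrix (Idx n) (Idx n) ℝ) :
    MultilinearMap ℝ (fun _ : Idx n => Idx n → ℝ) ℝ where
  toFun v := ∏ k : Fin n, v (k,0) ⬝ᵥ a *ᵥ v (k,1)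
  map_update_add' := by
    intro _ v i x y
    obtain ⟨k, b⟩ := i
    rw [mm_aux, mm_aux, mm_aux, ← add_mul]
    congr 1
    split_ifs <;> simp [mulVec_add]
  map_update_smul' := by
    intro _ v i c x
    obtain ⟨k, b⟩ := i
    rw [mm_aux, mm_aux, smul_eq_mul, ← mul_assoc]
    congr 1
    split_ifs <;> simp [mulVec_smul]

lemma P_congr {n : ℕ} (M a : Matrix (Idx n) (Idx n) ℝ) :
    P (M * a * Mᵀ) = M.det * P a := by
  classical
  have key : ∀ N : Idx n → Idx n → ℝ,
      MultilinearMap.alternatization (mm a) N = P (Matrix.of N * a * (Matrix.of N)ᵀ) := by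
    intro N
    rw [MultilinearMap.alternatization_apply]
    unfold P
    refine Finset.sum_congr rfl fun σ _ => ?_
    simp only [MultilinearMap.domDomCongr_apply, mm, MultilinearMap.coe_mk]
    rw [Units.smul_def, zsmul_eq_mul]
    congr 1
    refine Finset.prod_congr rfl fun k _ => ?_
    rw [dotProduct_mulVec]
    rfl
  have h := AlternatingMap.eq_smul_basis_det (Pi.basisFun ℝ (Idx n))
    (MultilinearMap.alternatization (mm a))
  have h1 := key (Pi.basisFun ℝ (Idx n))
  let M' : Idx n → Idx n → ℝ := fun i j => M i j
  have hM := key M'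
  have e1 : Matrix.of (⇑(Pi.basisFun ℝ (Idx n))) = (1 : Matrix (Idx n) (Idx n) ℝ) := by
    ext i j
    simp [Pi.single_apply, Matrix.one_apply, eq_comm]
  rw [e1] at h1
  simp only [transpose_one, Matrix.mul_one, Matrix.one_mul] at h1
  rw [h, AlternatingMap.smul_apply, h1, Pi.basisFun_det_apply] at hM
  change _ = P (M * a * Mᵀ) at hM
  rw [← hM, smul_eq_mul, mul_comm]
  rfl

/-- greedy symplectic vectors -/
lemma exists_symplectic {V : Type*} [AddCommGroup V] [Module ℝ V] [FiniteDimensional ℝ V]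
    (B : V →ₗ[ℝ] V →ₗ[ℝ] ℝ) (hB : ∀ v w, B v w = - B w v)
    (hnd : ∀ w, w ≠ 0 → ∃ u, B w u ≠ 0) (k : ℕ) (hk : 2 * k ≤ Module.finrank ℝ V) :
    ∃ e f : Fin k → V, ∀ i j, B (e i) (e j) = 0 ∧ B (f i) (f j) = 0 ∧
      B (e i) (f j) = if i = j then 1 else 0 := by
  induction k with
  | zero => exact ⟨fun _ => 0, fun _ => 0, fun i => i.elim0⟩
  | succ k ih =>
    obtain ⟨e, f, h⟩ := ih (by omega)
    let L : V →ₗ[ℝ] (Fin k ⊕ Fin k → ℝ) := LinearMap.pi (Sum.elim (fun i => B (e i)) (fun i => B (f i)))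
    have hL : LinearMap.ker L ≠ ⊥ := LinearMap.ker_ne_bot_of_finrank_lt (by
      simp; omega)
    obtain ⟨w, hw, hw0⟩ := (Submodule.ne_bot_iff _).1 hL
    have hwe : ∀ i, B (e i) w = 0 := fun i => congrFun hw (Sum.inl i)
    have hwf : ∀ i, B (f i) w = 0 := fun i => congrFun hw (Sum.inr i)
    have hwe' : ∀ i, B w (e i) = 0 := fun i => by rw [hB, hwe, neg_zero]
    have hwf' : ∀ i, B w (f i) = 0 := fun i => by rw [hB, hwf, neg_zero]
    obtain ⟨u0, hu0⟩ := hnd w hw0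
    let u := (B w u0)⁻¹ • u0
    have hu : B w u = 1 := by simp [u, hu0]
    let z := u - ∑ i, (B (e i) u • f i - B (f i) u • e i)
    have hfe : ∀ i j, B (f i) (e j) = - if j = i then 1 else 0 := fun i j => by
      rw [hB, (h j i).2.2]
    have hwz : B w z = 1 := by simp [z, hu, hwe', hwf']
    have hez : ∀ j, B (e j) z = 0 := fun j => by
      simp [z, (h j _).1, (h j _).2.2]
    have hfz : ∀ j, B (f j) z = 0 := fun j => by
      simp [z, (h j _).2.1, hfe]
    have hze : ∀ i, B z (e i) = 0 := fun i => by rw [hB, hez, neg_zero]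
    have hzf : ∀ i, B z (f i) = 0 := fun i => by rw [hB, hfz, neg_zero]
    have hself : ∀ v, B v v = 0 := fun v => by have := hB v v; linarith
    refine ⟨Fin.cons w e, Fin.cons z f, fun i j => ?_⟩
    refine Fin.cases ?_ (fun i => ?_) i <;> refine Fin.cases ?_ (fun j => ?_) j
    · simp [hself, hwz]
    · simp [hwe', hzf, hwf', (Fin.succ_ne_zero _).symm]
    · simp [hwe, hfz, hez]
    · simpa using h i j

lemma exists_std {n : ℕ} (B : Matrix (Idx n) (Idx n) ℝ) (hB : Bᵀ = -B) (hd : B.det ≠ 0) :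
    ∃ M : Matrix (Idx n) (Idx n) ℝ, M * B * Mᵀ = K n - (K n)ᵀ := by
  classical
  have hBs : ∀ v w : Idx n → ℝ, Matrix.toLinearMap₂' ℝ B v w = - Matrix.toLinearMap₂' ℝ B w v := by
    intro v w
    rw [Matrix.toLinearMap₂'_apply', Matrix.toLinearMap₂'_apply', dotProduct_comm, ← vecMul_transpose,
      hB, ← dotProduct_mulVec, neg_mulVec, dotProduct_neg]
  obtain ⟨e, f, h⟩ := exists_symplectic (Matrix.toLinearMap₂' ℝ B) hBs (by
      intro w hw
      by_contra! hc
      apply hd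
      rw [← Matrix.exists_vecMul_eq_zero_iff]
      refine ⟨w, hw, ?_⟩
      apply dotProduct_eq_zero
      intro u
      rw [← dotProduct_mulVec, ← Matrix.toLinearMap₂'_apply', hc]) n (by simp [mul_comm])
  let M : Matrix (Idx n) (Idx n) ℝ := fun i => if i.2 = 0 then e i.1 else f i.1
  have hM : ∀ i j, (M * B * Mᵀ) i j = Matrix.toLinearMap₂' ℝ B (M i) (M j) := by
    intro i j
    rw [Matrix.toLinearMap₂'_apply', dotProduct_mulVec]
    rfl
  refine ⟨M, ?_⟩
  ext ⟨i, b⟩ ⟨j, c⟩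
  rw [hM]
  fin_cases b <;> fin_cases c
  · simp [M, K, (h i j).1]
  · simp [M, K, (h i j).2.2]
  · simp only [M, K]
    rw [hBs]
    simp [K, (h j i).2.2]
  · simp [M, K, (h i j).2.1]

lemma det_J (n : ℕ) : (K n - (K n)ᵀ).det = 1 := by
  have : K n - (K n)ᵀ = (Matrix.blockDiagonal (fun _ : Fin n => !![(0:ℝ), 1; -1, 0])).submatrix
      (Equiv.prodComm (Fin n) (Fin 2)) (Equiv.prodComm (Fin n) (Fin 2)) := by
    ext ⟨i, b⟩ ⟨j, c⟩
    fin_cases b <;> fin_cases c <;> simp [K, Matrix.blockDiagonal_apply, eq_comm, apply_ite]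
  rw [this, Matrix.det_submatrix_equiv_self, Matrix.det_blockDiagonal]
  simp [Matrix.det_fin_two]

lemma pf_sq_of_ne {n : ℕ} (a : Matrix (Idx n) (Idx n) ℝ) (hd : (a - aᵀ).det ≠ 0) :
    P a ^ 2 = (n.factorial : ℝ) ^ 2 * (a - aᵀ).det := by
  obtain ⟨M, hM⟩ := exists_std (a - aᵀ) (by simp) hd
  have hJ := det_J n
  have h1 : M.det * P a = n.factorial := by
    rw [← P_congr, ← P_K]
    have hc : (Fintype.card (Fin n → Perm (Fin 2)) : ℝ) ≠ 0 := by
      exact_mod_cast Fintype.card_ne_zero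
    apply mul_left_cancel₀ hc
    rw [← P_skew, ← P_skew, ← hM]
    congr 1
    simp [Matrix.mul_sub, Matrix.sub_mul, Matrix.mul_assoc]
  rw [← hM, det_mul, det_mul, det_transpose] at hJ
  rw [← h1]
  linear_combination (- P a ^ 2) * hJ

lemma pf_sq {n : ℕ} (a : Matrix (Idx n) (Idx n) ℝ) :
    P a ^ 2 = (n.factorial : ℝ) ^ 2 * (a - aᵀ).det := by
  classical
  set J := K n - (K n)ᵀ with hJ
  have hJd : J.det = 1 := det_J n
  let A : ℝ → Matrix (Idx n) (Idx n) ℝ := fun t => a + t • K n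
  have hA : ∀ t, A t - (A t)ᵀ = (a - aᵀ) + t • J := by
    intro t
    simp only [A, hJ, transpose_add, transpose_smul, smul_sub]
    abel
  have hdet : ∀ t, (A t - (A t)ᵀ).det = (-(J⁻¹ * (a - aᵀ))).charpoly.eval t := by
    intro t
    rw [Matrix.eval_charpoly, hA]
    have hu : IsUnit J.det := by rw [hJd]; exact isUnit_one
    have : (a - aᵀ) + t • J = J * (Matrix.scalar _ t - -(J⁻¹ * (a - aᵀ))) := by
      rw [sub_neg_eq_add, Matrix.mul_add, ← Matrix.mul_assoc, Matrix.mul_nonsing_inv _ hu,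
        Matrix.one_mul, Matrix.scalar_apply, ← Matrix.smul_one_eq_diagonal, Matrix.mul_smul,
        Matrix.mul_one, add_comm]
    rw [this, det_mul, hJd, one_mul]
  have hcont : Continuous A := by fun_prop
  have hfin : {t : ℝ | (A t - (A t)ᵀ).det = 0}.Finite := by
    simp_rw [hdet]
    exact Polynomial.finite_setOfPred_isRoot (Matrix.charpoly_monic _).ne_zero
  have hdense : Dense ({t : ℝ | (A t - (A t)ᵀ).det = 0}ᶜ) := Set.Countable.dense_compl ℝ hfin.countable
  have hc1 : Continuous fun t => P (A t) ^ 2 := by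
    unfold P
    have : ∀ i j, Continuous fun t => A t i j := fun i j => by
      simp only [A, Matrix.add_apply, Matrix.smul_apply]; fun_prop
    fun_prop
  have hc2 : Continuous fun t => (n.factorial : ℝ) ^ 2 * (A t - (A t)ᵀ).det :=
    continuous_const.mul (Continuous.matrix_det (hcont.sub hcont.matrix_transpose))
  have := Continuous.ext_on hdense hc1 hc2 (fun t ht => pf_sq_of_ne (A t) ht)
  have h0 := congrFun this 0
  simpa [A] using h0

lemma integral_det {n : ℕ} (F G : Idx n → ℝ → ℝ)
    (hFG : ∀ i j, Integrable (fun t : ℝ => F i t * G j t)) :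
    ∫ y : Fin n → ℝ, Matrix.det (Matrix.of fun (i c : Idx n) =>
      if c.2 = 0 then F i (y c.1) else G i (y c.1)) =
    P (Matrix.of fun i j => ∫ t, F i t * G j t) := by
  simp only [Matrix.det_apply', P, Matrix.of_apply, Fintype.prod_prod_type, Fin.prod_univ_two,
    if_true, one_ne_zero, if_false]
  rw [integral_finsetSum]
  · refine Finset.sum_congr rfl fun σ _ => ?_
    rw [integral_const_mul]
    congr 1
    exact integral_fintype_prod_volume_eq_prod
      (fun k t => F (σ (k, 0)) t * G (σ (k, 1)) t)
  · intro σ _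
    refine Integrable.const_mul ?_ _
    exact Integrable.fintype_prod (f := fun k t => F (σ (k, 0)) t * G (σ (k, 1)) t)
      (fun k => hFG _ _)

end DeBruijn

/-- de Bruijn's identity: the square of
`(1/n!) ∫_{ℝ^n} det( F_i(y_1), G_i(y_1), …, F_i(y_n), G_i(y_n) )_{0≤i≤2n-1} dy`
equals the determinant of the `2n×2n` skew-symmetric matrix
`A_{ij} = ∫_ℝ (G_i F_j − F_i G_j) dy`. -/
theorem de_bruijn_identity (n : ℕ) (F G : Fin (2 * n) → ℝ → ℝ)
    (hFmeas : ∀ i, Measurable (F i)) (hGmeas : ∀ i, Measurable (G i))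
    (hFG : ∀ i j, Integrable (fun t : ℝ => F i t * G j t)) :
    (((n.factorial : ℝ))⁻¹ *
        ∫ y : Fin n → ℝ,
          Matrix.det (Matrix.of fun (i c : Fin (2 * n)) =>
            if (c : ℕ) % 2 = 0 then F i (y ⟨(c : ℕ) / 2, by have := c.isLt; omega⟩)
            else G i (y ⟨(c : ℕ) / 2, by have := c.isLt; omega⟩))) ^ 2 =
      Matrix.det (Matrix.of fun i j : Fin (2 * n) =>
        ∫ t : ℝ, (G i t * F j t - F i t * G j t)) := by
  let e : DeBruijn.Idx n ≃ Fin (2 * n) := finProdFinEquiv.trans (finCongr (mul_comm n 2))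
  have he : ∀ c, (e c : ℕ) = (c.2 : ℕ) + 2 * c.1 := fun c => rfl
  have h1 := DeBruijn.integral_det (fun i => F (e i)) (fun i => G (e i)) (fun i j => hFG _ _)
  have h2 := DeBruijn.pf_sq (Matrix.of fun i j => ∫ t, F (e i) t * G (e j) t)
  have hL : ∀ y : Fin n → ℝ, Matrix.det (Matrix.of fun (i c : Fin (2 * n)) =>
            if (c : ℕ) % 2 = 0 then F i (y ⟨(c : ℕ) / 2, by have := c.isLt; omega⟩)
            else G i (y ⟨(c : ℕ) / 2, by have := c.isLt; omega⟩)) =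
      Matrix.det (Matrix.of fun (i c : DeBruijn.Idx n) =>
        if c.2 = 0 then F (e i) (y c.1) else G (e i) (y c.1)) := by
    intro y
    rw [← Matrix.det_submatrix_equiv_self e]
    congr 1
    ext i ⟨k, b⟩
    have hq : (⟨(e (k, b) : ℕ) / 2, by have := (e (k, b)).isLt; omega⟩ : Fin n) = k := by
      apply Fin.ext
      simp only [he]
      omega
    simp only [Matrix.submatrix_apply, Matrix.of_apply]
    rw [hq]
    have hb : (e (k, b) : ℕ) % 2 = 0 ↔ b = 0 := by
      rw [he, Fin.ext_iff]
      simp only [Fin.val_zero]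
      omega
    simp only [hb]
  simp_rw [hL]
  rw [h1, mul_pow, h2, ← mul_assoc, ← mul_pow,
    inv_mul_cancel₀ (by exact_mod_cast n.factorial_ne_zero), one_pow, one_mul,
    ← Matrix.det_submatrix_equiv_self e (Matrix.of fun i j : Fin (2 * n) => _)]
  rw [← neg_sub, Matrix.det_neg]
  have hcard : (-1 : ℝ) ^ Fintype.card (DeBruijn.Idx n) = 1 := by
    simp
  rw [hcard, one_mul]
  congr 1
  ext i j
  simp only [Matrix.submatrix_apply, Matrix.of_apply, Matrix.sub_apply, Matrix.transpose_apply]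
  rw [← integral_sub (hFG _ _) (hFG _ _)]
  simp only [mul_comm]
end

section
/- Under the Robinson–Schensted correspondence π ↦ (P(π), Q(π)), if π ↦ (P,Q) then π^{-1} ↦ (Q,P); consequently involutions π (π² = id) correspond bijectively to single standard Young tableaux P (via π ↦ (P,P)). -/
/-- Schensted row insertion: `v` bumps the first entry strictly greater than `v`. -/
def insertRow : List ℕ → ℕ → List ℕ × Option ℕ
  | [], v => ([v], none)
  | a :: as, v =>
      if v < a then (v :: as, some a)
      else
        let r := insertRow as v
        (a :: r.1, r.2)

/-- Schensted insertion of a value into a tableau (list of rows). -/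
def insertTab : List (List ℕ) → ℕ → List (List ℕ)
  | [], v => [[v]]
  | r :: rs, v =>
      match insertRow r v with
      | (r', none) => r' :: rs
      | (r', some w) => r' :: insertTab rs w

/-- Update the recording tableau `Q`: place the new label `m` in the (unique) row of `Q`
that is shorter than the corresponding row of the new insertion tableau `P'`. -/
def fitQ : List (List ℕ) → List (List ℕ) → ℕ → List (List ℕ)
  | _, [], _ => []
  | [], p :: ps, m => [m] :: fitQ [] ps m
  | q :: qs, p :: ps, m => (if q.length < p.length then q ++ [m] else q) :: fitQ qs ps m

/-- The Robinson–Schensted correspondence: reading the word `w` left to right, build the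
insertion tableau `P` by Schensted insertion and the recording tableau `Q` by placing the
successive labels `0, 1, 2, …` at the newly created cells. -/
def rsk (w : List ℕ) : List (List ℕ) × List (List ℕ) :=
  let r := w.foldl (fun s x =>
    let P' := insertTab s.1 x
    (P', fitQ s.2.1 P' s.2.2, s.2.2 + 1)) (([] : List (List ℕ)), ([] : List (List ℕ)), 0)
  (r.1, r.2.1)

/-- The word `π(0), π(1), …, π(n-1)` of a permutation `π ∈ S_n`. -/
def permWord {n : ℕ} (π : Equiv.Perm (Fin n)) : List ℕ :=
  (List.finRange n).map fun i => (π i : ℕ)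

/-- A standard Young tableau with `n` boxes, presented as a list of rows: rows strictly
increase, rows weakly shorten downwards with strict increase along columns, there are no
empty rows, and the entries are exactly `0, 1, …, n-1`. -/
def IsSYTList (n : ℕ) (P : List (List ℕ)) : Prop :=
  (∀ r ∈ P, r.Chain' (· < ·)) ∧
  P.Chain' (fun r s => s.length ≤ r.length ∧ ∀ j < s.length, r.getD j 0 < s.getD j 0) ∧
  ([] : List ℕ) ∉ P ∧
  List.Perm P.flatten (List.range n)

/-! ### Growth-diagram edge labels -/

/-- Local rule on edge labels. -/
def gstep (x : Prop) [Decidable x] : Option ℕ → Option ℕ → Option ℕ × Option ℕ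
  | none, none => if x then (some 0, some 0) else (none, none)
  | some r, none => (some r, none)
  | none, some s => (none, some s)
  | some r, some s => if r = s then (some (r+1), some (r+1)) else (some r, some s)

def gS (v : ℕ) (r : ℕ → Option ℕ) : ℕ → Option ℕ
  | 0 => none
  | j+1 => (gstep (v = j) (r j) (gS v r j)).2

def gN (v : ℕ) (r : ℕ → Option ℕ) (j : ℕ) : Option ℕ :=
  (gstep (v = j) (r j) (gS v r j)).1

def gR (w : ℕ → ℕ) : ℕ → ℕ → Option ℕ
  | 0 => fun _ => none
  | i+1 => gN (w i) (gR w i)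

theorem gstep_symm (x y : Prop) [Decidable x] [Decidable y] (h : x ↔ y) (a b : Option ℕ) :
    (gstep x a b).1 = (gstep y b a).2 ∧ (gstep x a b).2 = (gstep y b a).1 := by
  cases a <;> cases b <;> simp only [gstep, h] <;> grind

theorem growth_symm (n : ℕ) (w w' : ℕ → ℕ)
    (h : ∀ i < n, ∀ j < n, (w i = j ↔ w' j = i)) :
    ∀ i ≤ n, ∀ j < n, gR w i j = gS (w' j) (gR w' j) i := by
  intro i
  induction i with
  | zero => intro _ j _; simp [gR, gS]
  | succ i ih =>
    intro hi
    have ih := ih (by omega)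
    have hB : ∀ j ≤ n, gS (w i) (gR w i) j = gR w' j i := by
      intro j
      induction j with
      | zero => intro _; simp [gR, gS]
      | succ j ihj =>
        intro hj
        simp only [gR, gS, gN]
        rw [ih j (by omega), ihj (by omega)]
        exact (gstep_symm _ _ (h i (by omega) j (by omega)) _ _).2
    intro j hj
    simp only [gR, gS, gN]
    rw [ih j hj, hB j (by omega)]
    exact (gstep_symm _ _ (h i (by omega) j (by omega)) _ _).1

def gcnt (r : ℕ → Option ℕ) : ℕ → ℕ → ℕ
  | 0, _ => 0
  | j+1, k => gcnt r j k + if r j = some k then 1 else 0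

def gValid (r : ℕ → Option ℕ) (n : ℕ) : Prop :=
  ∀ j < n, ∀ k, r j = some (k+1) → gcnt r j (k+1) < gcnt r j k

theorem gcnt_anti (r : ℕ → Option ℕ) (n : ℕ) (h : gValid r n) :
    ∀ j ≤ n, ∀ k, gcnt r j (k+1) ≤ gcnt r j k := by
  intro j
  induction j with
  | zero => intro _ k; simp [gcnt]
  | succ j ih =>
    intro hj k
    have h1 := ih (by omega) k
    have h2 := h j (by omega) k
    simp only [gcnt]
    split_ifs <;> grind

theorem gcol (v n : ℕ) (r : ℕ → Option ℕ) (h : gValid r n) : ∀ j ≤ n,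
    (∀ k, gcnt (gN v r) j k = gcnt r j k + if gS v r j = some k then 1 else 0) ∧
    (∀ k, gS v r j = some (k+1) → gcnt r j (k+1) < gcnt r j k) := by
  intro j
  induction j with
  | zero => intro _; simp [gcnt, gS]
  | succ j ih =>
    intro hj
    obtain ⟨h1, h2⟩ := ih (by omega)
    have h3 := gcnt_anti r n h j (by omega)
    simp only [gcnt, gS, gN, h1]
    constructor
    · intro k
      obtain ⟨a, hr⟩ : ∃ a, r j = a := ⟨_, rfl⟩
      obtain ⟨s, hs⟩ : ∃ s, gS v r j = s := ⟨_, rfl⟩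
      simp only [hr, hs] at *
      cases a <;> cases s <;> simp only [gstep] <;> grind
    · intro k
      have := h3 k
      have := h2 k
      obtain ⟨a, hr⟩ : ∃ a, r j = a := ⟨_, rfl⟩
      obtain ⟨s, hs⟩ : ∃ s, gS v r j = s := ⟨_, rfl⟩
      simp only [hr, hs] at *
      cases a <;> cases s <;> simp only [gstep] <;> grind

theorem gValid_next (v n : ℕ) (r : ℕ → Option ℕ) (h : gValid r n) : gValid (gN v r) n := by
  intro j hj k hk
  obtain ⟨h1, h2⟩ := gcol v n r h j hj.le
  have h3 := gcnt_anti r n h j hj.le k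
  have h4 := h j hj k
  rw [h1, h1]
  have h2 := h2 k
  unfold gN at hk
  generalize hs : gS v r j = s at *
  generalize hr : r j = a at *
  cases a <;> cases s <;> simp only [gstep] at hk <;> grind

theorem gValid_R (w : ℕ → ℕ) (n i : ℕ) : gValid (gR w i) n := by
  induction i with
  | zero => intro j _ k hk; simp [gR] at hk
  | succ i ih => exact gValid_next _ _ _ ih

theorem gS_none (v : ℕ) (r : ℕ → Option ℕ) : ∀ j ≤ v, gS v r j = none := by
  intro j
  induction j with
  | zero => intro _; rfl
  | succ j ih =>
    intro hj
    simp only [gS, ih (by omega)]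
    have : v ≠ j := by omega
    cases r j <;> simp [gstep, this]

theorem gN_lt (v : ℕ) (r : ℕ → Option ℕ) (j : ℕ) (hj : j < v) : gN v r j = r j := by
  simp only [gN, gS_none v r j hj.le]
  have : v ≠ j := by omega
  cases r j <;> simp [gstep, this]

theorem gN_none (v : ℕ) (r : ℕ → Option ℕ) (j : ℕ) : gN v r j = none ↔ r j = none ∧ j ≠ v := by
  by_cases hj : j = v
  · subst hj
    simp only [gN, gS_none j r j le_rfl]
    cases r j <;> simp [gstep]
  · simp only [gN]
    have : v ≠ j := by omega
    cases r j <;> cases gS v r j <;> simp only [gstep] <;> grind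

theorem gR_none (w : ℕ → ℕ) (i j : ℕ) : gR w i j = none ↔ ∀ i' < i, w i' ≠ j := by
  induction i with
  | zero => simp [gR]
  | succ i ih =>
    simp only [gR, gN_none, ih, Nat.lt_succ_iff_lt_or_eq]
    grind

theorem gN_self (v : ℕ) (r : ℕ → Option ℕ) (hv : r v = none) :
    gN v r v = some 0 ∧ gS v r (v+1) = some 0 := by
  simp [gN, gS, gS_none v r v le_rfl, hv, gstep]

/-! ### Tableaux -/

def addEnd : List (List ℕ) → ℕ → ℕ → List (List ℕ)
  | [], _, m => [[m]]
  | r :: rs, 0, m => (r ++ [m]) :: rs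
  | r :: rs, k+1, m => r :: addEnd rs k m

def newRow : List (List ℕ) → ℕ → ℕ
  | [], _ => 0
  | r :: rs, v =>
      match insertRow r v with
      | (_, none) => 0
      | (_, some w) => newRow rs w + 1

def gB (r : ℕ → Option ℕ) : ℕ → List (List ℕ)
  | 0 => []
  | j+1 => match r j with
    | none => gB r j
    | some k => addEnd (gB r j) k j

theorem insertRow_append (l : List ℕ) (v m : ℕ) (hv : v < m) :
    insertRow (l ++ [m]) v = match insertRow l v with
      | (l', none) => (l', some m)
      | (l', some w) => (l' ++ [m], some w) := by
  induction l with
  | nil => simp [insertRow, hv]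
  | cons a as ih =>
    simp only [List.cons_append, insertRow, ih]
    split_ifs
    · rfl
    · rcases h : insertRow as v with ⟨l', _ | w⟩ <;> simp

theorem insertRow_max (l : List ℕ) (m : ℕ) (h : ∀ x ∈ l, x < m) :
    insertRow l m = (l ++ [m], none) := by
  induction l with
  | nil => rfl
  | cons a as ih =>
    have := h a (by simp)
    simp [insertRow, ih (fun x hx => h x (by simp [hx]))]
    omega

theorem insertRow_none (l : List ℕ) (v : ℕ) (h : (insertRow l v).2 = none) :
    (insertRow l v).1 = l ++ [v] := by
  induction l with
  | nil => rfl
  | cons a as ih =>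
    simp only [insertRow] at *
    split_ifs at * <;> simp_all

theorem insertRow_some (l : List ℕ) (v w : ℕ) (h : (insertRow l v).2 = some w) :
    w ∈ l ∧ (insertRow l v).1.length = l.length := by
  induction l with
  | nil => simp [insertRow] at h
  | cons a as ih =>
    simp only [insertRow] at *
    split_ifs at * <;> simp_all

theorem insertTab_max (T : List (List ℕ)) (m : ℕ) (h : ∀ x ∈ T.flatten, x < m) :
    insertTab T m = addEnd T 0 m ∧ newRow T m = 0 := by
  cases T with
  | nil => simp [insertTab, addEnd, newRow]
  | cons r rs =>
    have := insertRow_max r m (fun x hx => h x (by simp [hx]))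
    simp [insertTab, addEnd, newRow, this]

theorem insertTab_addEnd (T : List (List ℕ)) : ∀ (a v m : ℕ), (∀ x ∈ T.flatten, x < m) → v < m →
    a ≤ T.length →
    (a ≠ newRow T v → insertTab (addEnd T a m) v = addEnd (insertTab T v) a m ∧
      newRow (addEnd T a m) v = newRow T v) ∧
    (a = newRow T v → insertTab (addEnd T a m) v = addEnd (insertTab T v) (a+1) m ∧
      newRow (addEnd T a m) v = a + 1) := by
  induction T with
  | nil =>
    intro a v m _ hv ha
    have : a = 0 := by simpa using ha
    subst this
    simp [newRow, addEnd, insertTab, insertRow, hv]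
  | cons r rs ih =>
    intro a v m hT hv ha
    have hrs : ∀ x ∈ rs.flatten, x < m := fun x hx => hT x (by
      rw [List.flatten_cons]; exact List.mem_append_right _ hx)
    have hr : ∀ x ∈ r, x < m := fun x hx => hT x (by simp [hx])
    rcases h : insertRow r v with ⟨r', _ | w⟩
    · cases a with
      | zero =>
        have h2 := insertTab_max rs m hrs
        simp [newRow, addEnd, insertTab, h, insertRow_append _ _ _ hv, h2]
      | succ a => simp [newRow, addEnd, insertTab, h]
    · have hw : w < m := hr w (insertRow_some r v w (by rw [h])).1
      cases a with
      | zero =>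
        simp [newRow, addEnd, insertTab, h, insertRow_append _ _ _ hv]
      | succ a =>
        have := ih a w m hrs hw (by simpa using ha)
        simp only [newRow, addEnd, insertTab, h]
        constructor
        · intro hne
          have := this.1 (by omega)
          simp [this]
        · intro he
          have := this.2 (by omega)
          simp [this]

theorem addEnd_perm (T : List (List ℕ)) (a m : ℕ) :
    List.Perm (addEnd T a m).flatten (m :: T.flatten) := by
  induction T generalizing a with
  | nil => simp [addEnd]
  | cons r rs ih =>
    cases a with
    | zero =>
      simp only [addEnd, List.flatten_cons, List.append_assoc]
      exact List.perm_middle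
    | succ a =>
      simp only [addEnd, List.flatten_cons]
      exact ((ih a).append_left r).trans List.perm_middle

theorem mem_addEnd (T : List (List ℕ)) (a m x : ℕ) :
    x ∈ (addEnd T a m).flatten ↔ x = m ∨ x ∈ T.flatten := by
  rw [(addEnd_perm T a m).mem_iff]; simp

theorem mem_gB (r : ℕ → Option ℕ) (j x : ℕ) : x ∈ (gB r j).flatten ↔ x < j ∧ r x ≠ none := by
  induction j with
  | zero => simp [gB]
  | succ j ih =>
    simp only [gB]
    cases h : r j with
    | none => simp only [ih]; grind
    | some k => simp only [mem_addEnd, ih]; grind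

theorem rowlen_addEnd (T : List (List ℕ)) (a m k : ℕ) (ha : a ≤ T.length) :
    ((addEnd T a m).getD k []).length = (T.getD k []).length + if a = k then 1 else 0 := by
  induction T generalizing a k with
  | nil =>
    have : a = 0 := by simpa using ha
    subst this
    cases k <;> simp [addEnd]
  | cons r rs ih =>
    cases a with
    | zero => cases k <;> simp [addEnd]
    | succ a =>
      cases k with
      | zero => simp [addEnd]
      | succ k =>
        have := ih a k (by simpa using ha)
        simpa [addEnd] using this

theorem rowlen_gB (r : ℕ → Option ℕ) (n : ℕ) (h : gValid r n) : ∀ j ≤ n,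
    (∀ k, ((gB r j).getD k []).length = gcnt r j k) ∧
    (j < n → ∀ a, r j = some a → a ≤ (gB r j).length) := by
  intro j
  induction j with
  | zero =>
    intro _
    refine ⟨by simp [gB, gcnt], ?_⟩
    intro hj a ha
    cases a with
    | zero => simp
    | succ a => have := h 0 hj a ha; simp [gcnt] at this
  | succ j ih =>
    intro hj
    obtain ⟨h1, h2⟩ := ih (by omega)
    have key : ∀ k, ((gB r (j+1)).getD k []).length = gcnt r (j+1) k := by
      intro k
      simp only [gB, gcnt]
      cases hr : r j with
      | none => simpa using h1 k
      | some a =>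
        simp only [rowlen_addEnd _ _ _ _ (h2 (by omega) a hr), h1]
        simp
    refine ⟨key, ?_⟩
    intro hj a ha
    cases a with
    | zero => simp
    | succ a =>
      have := h (j+1) hj a ha
      rw [← key a] at this
      by_contra hc
      rw [List.getD_eq_default _ _ (by omega)] at this
      simp at this

theorem gB_congr (r r' : ℕ → Option ℕ) (n : ℕ) (h : ∀ j < n, r j = r' j) : gB r n = gB r' n := by
  induction n with
  | zero => rfl
  | succ n ih => simp only [gB, h n (by omega), ih (fun j hj => h j (by omega))]

/-- Inserting `v` moves the column labels from `r` to `gN v r`. -/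
theorem insert_gB (v n : ℕ) (r : ℕ → Option ℕ) (h : gValid r n) (hv : r v = none) :
    ∀ j ≤ n, v < j → insertTab (gB r j) v = gB (gN v r) j ∧
      gS v r j = some (newRow (gB r j) v) := by
  intro j
  induction j with
  | zero => intro _ h; omega
  | succ j ih =>
    intro hj hvj
    rcases Nat.lt_succ_iff_lt_or_eq.1 hvj with hlt | heq
    · obtain ⟨h1, h2⟩ := ih (by omega) hlt
      have hne : v ≠ j := by omega
      simp only [gB, gN, gS, h2]
      cases hr : r j with
      | none => simp [gstep, h1]
      | some a =>
        have hlen := (rowlen_gB r n h j (by omega)).2 (by omega) a hr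
        have hm := insertTab_addEnd (gB r j) a v j (fun x hx => ((mem_gB r j x).1 hx).1) hlt hlen
        simp only [gstep]
        by_cases hc : a = newRow (gB r j) v
        · have h3 := hm.2 hc
          rw [if_pos hc]
          simp [h3, h1]
        · have h3 := hm.1 hc
          rw [if_neg hc]
          simp [h3, h1]
    · subst heq
      obtain ⟨h1, h2⟩ := gN_self v r hv
      have h3 := insertTab_max (gB r v) v (fun x hx => ((mem_gB r v x).1 hx).1)
      have h4 := gB_congr (gN v r) r v (fun j hj => gN_lt v r j hj)
      simp [gB, h1, h2, hv, h3, h4]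

theorem fitQ_self (Q P : List (List ℕ)) (m : ℕ) (h : Q.map List.length = P.map List.length) :
    fitQ Q P m = Q := by
  induction Q generalizing P with
  | nil => cases P <;> simp_all [fitQ]
  | cons q qs ih =>
    cases P with
    | nil => simp at h
    | cons p ps =>
      simp only [List.map_cons, List.cons.injEq] at h
      simp [fitQ, h.1, ih ps h.2]

theorem fitQ_insert (Q P : List (List ℕ)) (v m : ℕ) (h : Q.map List.length = P.map List.length) :
    fitQ Q (insertTab P v) m = addEnd Q (newRow P v) m ∧
    (addEnd Q (newRow P v) m).map List.length = (insertTab P v).map List.length := by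
  induction Q generalizing P v with
  | nil => cases P <;> simp_all [fitQ, insertTab, addEnd]
  | cons q qs ih =>
    cases P with
    | nil => simp at h
    | cons p ps =>
      simp only [List.map_cons, List.cons.injEq] at h
      rcases hi : insertRow p v with ⟨r', _ | w⟩
      · have h1 := insertRow_none p v (by rw [hi])
        rw [hi] at h1
        simp only at h1
        subst h1
        simp [insertTab, newRow, hi, fitQ, addEnd, h, fitQ_self]
      · have h1 := (insertRow_some p v w (by rw [hi])).2
        rw [hi] at h1
        simp only at h1
        have h2 := ih ps w h.2
        simp [insertTab, newRow, hi, fitQ, addEnd, h, h1, h2]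

theorem rsk_fold (n : ℕ) (w : ℕ → ℕ) (hw : ∀ i < n, w i < n)
    (hinj : ∀ i < n, ∀ j < n, w i = w j → i = j) (i : ℕ) (hi : i ≤ n) :
    (((List.range i).map w).foldl (fun (s : List (List ℕ) × List (List ℕ) × ℕ) x =>
      let P' := insertTab s.1 x
      (P', fitQ s.2.1 P' s.2.2, s.2.2 + 1)) (([] : List (List ℕ)), ([] : List (List ℕ)), 0)) =
      (gB (gR w i) n, gB (fun i => gS (w i) (gR w i) n) i, i) ∧
    (gB (fun i => gS (w i) (gR w i) n) i).map List.length =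
      (gB (gR w i) n).map List.length := by
  induction i with
  | zero =>
    have : gB (gR w 0) n = [] := by
      have : ∀ n, gB (gR w 0) n = [] := by
        intro n
        induction n with
        | zero => rfl
        | succ n ih => simpa [gB, gR] using ih
      exact this n
    simp [this, gB]
  | succ i ih =>
    obtain ⟨h1, h2⟩ := ih (by omega)
    have hn : gR w i (w i) = none := by
      rw [gR_none]
      intro i' hi' he
      have := hinj i' (by omega) i (by omega) he
      omega
    obtain ⟨h3, h4⟩ := insert_gB (w i) n (gR w i) (gValid_R w n i) hn n le_rfl (hw i (by omega))
    have h5 := fitQ_insert _ _ (w i) i h2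
    rw [List.range_succ, List.map_append, List.foldl_append, h1]
    simp only [List.map_cons, List.map_nil, List.foldl_cons, List.foldl_nil, gB, gR, h4, ← h3,
      h5, true_and, and_self]

theorem rsk_eq (n : ℕ) (w : ℕ → ℕ) (hw : ∀ i < n, w i < n)
    (hinj : ∀ i < n, ∀ j < n, w i = w j → i = j) :
    rsk ((List.range n).map w) = (gB (gR w n) n, gB (fun i => gS (w i) (gR w i) n) n) := by
  have := (rsk_fold n w hw hinj n le_rfl).1
  simp only [rsk]
  rw [this]

/-! ### Standardness -/

theorem addEnd_chain (T : List (List ℕ)) (a m : ℕ) (hT : ∀ x ∈ T.flatten, x < m)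
    (hc : T.IsChain (fun r s => s.length ≤ r.length ∧ ∀ j < s.length, r.getD j 0 < s.getD j 0))
    (ha : a ≤ T.length)
    (hk : ∀ k, a = k + 1 → (T.getD (k+1) []).length < (T.getD k []).length) :
    (addEnd T a m).IsChain
      (fun r s => s.length ≤ r.length ∧ ∀ j < s.length, r.getD j 0 < s.getD j 0) := by
  induction T generalizing a with
  | nil => simp [addEnd]
  | cons r rs ih =>
    have hrs : ∀ x ∈ rs.flatten, x < m := fun x hx => hT x (by
      rw [List.flatten_cons]; exact List.mem_append_right _ hx)
    have hr : ∀ x ∈ r, x < m := fun x hx => hT x (by simp [hx])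
    have hget : ∀ j < r.length, r.getD j 0 < m := by
      intro j hj
      rw [List.getD_eq_getElem _ _ hj]
      exact hr _ (List.getElem_mem hj)
    cases rs with
    | nil =>
      rcases a with _ | a
      · simp [addEnd]
      · have h0 : a = 0 := by simpa using ha
        subst h0
        have := hk 0 rfl
        simp only [List.getD_cons_zero] at this
        have h1 : 0 < r.length := by simpa using this
        simp only [addEnd, List.isChain_cons_cons, List.isChain_singleton, and_true]
        refine ⟨by simp; omega, ?_⟩
        intro j hj
        have : j = 0 := by simpa using hj
        subst this
        simpa using hget 0 h1
    | cons s rest =>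
      rw [List.isChain_cons_cons] at hc
      obtain ⟨⟨hc1, hc2⟩, hc3⟩ := hc
      rcases a with _ | _ | a
      · simp only [addEnd, List.isChain_cons_cons]
        refine ⟨⟨by simp; omega, ?_⟩, hc3⟩
        intro j hj
        rw [List.getD_append _ _ _ _ (by omega)]
        exact hc2 j hj
      · have h1 := hk 0 rfl
        simp only [List.getD_cons_zero, List.getD_cons_succ] at h1
        have h2 := ih 0 hrs hc3 (by simp) (by simp)
        simp only [addEnd, List.isChain_cons_cons] at h2 ⊢
        refine ⟨⟨by simp; omega, ?_⟩, h2⟩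
        intro j hj
        simp only [List.length_append, List.length_cons, List.length_nil] at hj
        rcases Nat.lt_or_ge j s.length with h3 | h3
        · rw [List.getD_append _ _ _ _ h3]
          exact hc2 j h3
        · have : j = s.length := by omega
          subst this
          rw [List.getD_append_right _ _ _ _ h3]
          simpa using hget _ h1
      · have h2 := ih (a+1) hrs hc3 (by simpa using ha) (by
          intro k hk'
          have := hk (k+1) (by omega)
          simpa using this)
        simp only [addEnd, List.isChain_cons_cons] at h2 ⊢
        exact ⟨⟨hc1, hc2⟩, h2⟩

theorem mem_row_addEnd (T : List (List ℕ)) (a m : ℕ) (l : List ℕ) (h : l ∈ addEnd T a m) :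
    l ∈ T ∨ ∃ l', (l' = [] ∨ l' ∈ T) ∧ l = l' ++ [m] := by
  induction T generalizing a with
  | nil => right; exact ⟨[], by simpa [addEnd] using h⟩
  | cons r rs ih =>
    cases a with
    | zero =>
      simp only [addEnd, List.mem_cons] at h ⊢
      rcases h with h | h
      · right; exact ⟨r, by simp, h⟩
      · left; right; exact h
    | succ a =>
      simp only [addEnd, List.mem_cons] at h ⊢
      rcases h with h | h
      · left; left; exact h
      · rcases ih a h with h | ⟨l', h1, h2⟩
        · left; right; exact h
        · right; exact ⟨l', by tauto, h2⟩

theorem addEnd_SYT (T : List (List ℕ)) (a m : ℕ) (h : IsSYTList m T) (ha : a ≤ T.length)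
    (hk : ∀ k, a = k + 1 → (T.getD (k+1) []).length < (T.getD k []).length) :
    IsSYTList (m+1) (addEnd T a m) := by
  obtain ⟨h1, h2, h3, h4⟩ := h
  have hlt : ∀ x ∈ T.flatten, x < m := fun x hx => by simpa using h4.mem_iff.1 hx
  refine ⟨?_, addEnd_chain T a m hlt h2 ha hk, ?_, ?_⟩
  · intro l hl
    rcases mem_row_addEnd T a m l hl with hl | ⟨l', hl', rfl⟩
    · exact h1 l hl
    · rcases hl' with rfl | hl'
      · exact List.isChain_singleton m
      · have := h1 l' hl'
        refine List.isChain_append.2 ?_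
        refine ⟨this, by simp, ?_⟩
        intro x hx y hy
        simp only [List.head?_cons, Option.mem_def, Option.some.injEq] at hy
        subst hy
        exact hlt x (List.mem_flatten.2 ⟨l', hl', List.mem_of_mem_getLast? hx⟩)
  · intro hl
    rcases mem_row_addEnd T a m _ hl with hl | ⟨l', hl', h⟩
    · exact h3 hl
    · simp at h
  · refine (addEnd_perm T a m).trans ?_
    rw [List.range_succ]
    refine (h4.cons m).trans ?_
    exact (List.perm_append_singleton m _).symm

theorem gB_SYT (r : ℕ → Option ℕ) (n : ℕ) (h : gValid r n) (hall : ∀ j < n, r j ≠ none) :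
    ∀ j ≤ n, IsSYTList j (gB r j) := by
  intro j
  induction j with
  | zero => intro _; exact ⟨by simp [gB], List.isChain_nil, by simp [gB], by simp [gB]⟩
  | succ j ih =>
    intro hj
    have ih := ih (by omega)
    obtain ⟨h1, h2⟩ := rowlen_gB r n h j (by omega)
    obtain ⟨a, ha⟩ := Option.ne_none_iff_exists'.1 (hall j (by omega))
    simp only [gB, ha]
    refine addEnd_SYT _ _ _ ih (h2 (by omega) a ha) ?_
    intro k hk
    rw [h1, h1]
    exact h j (by omega) k (by rw [ha, hk])

/-! ### Row of an entry -/

def rowOf (P : List (List ℕ)) (x : ℕ) : ℕ := P.findIdx (fun r => decide (x ∈ r))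

theorem rowOf_iff (P : List (List ℕ)) (x k : ℕ) (hn : P.flatten.Nodup) (hx : x ∈ P.flatten) :
    rowOf P x = k ↔ x ∈ P.getD k [] := by
  have hlt : rowOf P x < P.length := by
    rw [rowOf, List.findIdx_lt_length]
    obtain ⟨l, hl, hxl⟩ := List.mem_flatten.1 hx
    exact ⟨l, hl, by simpa using hxl⟩
  have hmem : x ∈ P[rowOf P x] := by
    have := List.findIdx_getElem (p := fun r => decide (x ∈ r)) (xs := P) (w := hlt)
    exact of_decide_eq_true this
  constructor
  · rintro rfl
    rw [List.getD_eq_getElem _ _ hlt]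
    exact hmem
  · intro hk
    have hkl : k < P.length := by
      by_contra hc
      rw [List.getD_eq_default _ _ (by omega)] at hk
      simp at hk
    rw [List.getD_eq_getElem _ _ hkl] at hk
    have hp := (List.nodup_flatten.1 hn).2
    rw [List.pairwise_iff_getElem] at hp
    rcases lt_trichotomy (rowOf P x) k with h | h | h
    · exact absurd hk (fun hk => hp _ _ hlt hkl h hmem hk)
    · exact h
    · exact absurd hk (fun hk => hp _ _ hkl hlt h hk hmem)

theorem mem_getD_addEnd (T : List (List ℕ)) (a m k x : ℕ) (ha : a ≤ T.length) :
    x ∈ (addEnd T a m).getD k [] ↔ x ∈ T.getD k [] ∨ (x = m ∧ a = k) := by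
  induction T generalizing a k with
  | nil =>
    have : a = 0 := by simpa using ha
    subst this
    cases k <;> simp [addEnd]
  | cons r rs ih =>
    cases a with
    | zero => cases k <;> simp [addEnd]
    | succ a =>
      cases k with
      | zero => simp [addEnd]
      | succ k =>
        have := ih a k (by simpa using ha)
        simpa [addEnd] using this

theorem mem_getD_gB (r : ℕ → Option ℕ) (n : ℕ) (h : gValid r n) (j : ℕ) (hj : j ≤ n) (k x : ℕ) :
    x ∈ (gB r j).getD k [] ↔ x < j ∧ r x = some k := by
  induction j with
  | zero => simp [gB]
  | succ j ih =>
    have ih := ih (by omega)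
    simp only [gB]
    cases hr : r j with
    | none => simp only [ih]; grind
    | some a =>
      simp only [mem_getD_addEnd _ _ _ _ _ ((rowlen_gB r n h j (by omega)).2 (by omega) a hr), ih]
      grind

theorem SYT_nodup (n : ℕ) (P : List (List ℕ)) (h : IsSYTList n P) : P.flatten.Nodup :=
  h.2.2.2.nodup_iff.2 List.nodup_range

theorem SYT_mem (n : ℕ) (P : List (List ℕ)) (h : IsSYTList n P) (x : ℕ) :
    x ∈ P.flatten ↔ x < n := by
  rw [h.2.2.2.mem_iff]; simp

theorem rowOf_gB (r : ℕ → Option ℕ) (n : ℕ) (h : gValid r n) (hall : ∀ j < n, r j ≠ none)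
    (x : ℕ) (hx : x < n) : r x = some (rowOf (gB r n) x) := by
  have hS := gB_SYT r n h hall n le_rfl
  have := (rowOf_iff (gB r n) x _ (SYT_nodup n _ hS) ((SYT_mem n _ hS x).2 hx)).1 rfl
  rw [mem_getD_gB r n h n le_rfl] at this
  exact this.2

theorem getD_mem_flatten (P : List (List ℕ)) (k x : ℕ) (h : x ∈ P.getD k []) : x ∈ P.flatten := by
  by_cases hk : k < P.length
  · rw [List.getD_eq_getElem _ _ hk] at h
    exact List.mem_flatten.2 ⟨_, List.getElem_mem hk, h⟩
  · rw [List.getD_eq_default _ _ (by omega)] at h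
    simp at h

theorem SYT_row_mem (n : ℕ) (P : List (List ℕ)) (h : IsSYTList n P) (k x : ℕ) :
    x ∈ P.getD k [] ↔ x < n ∧ rowOf P x = k := by
  constructor
  · intro hx
    have h1 := getD_mem_flatten P k x hx
    exact ⟨(SYT_mem n P h x).1 h1, (rowOf_iff P x k (SYT_nodup n P h) h1).2 hx⟩
  · rintro ⟨h1, h2⟩
    exact (rowOf_iff P x k (SYT_nodup n P h) ((SYT_mem n P h x).2 h1)).1 h2

theorem SYT_row_sorted (n : ℕ) (P : List (List ℕ)) (h : IsSYTList n P) (k : ℕ) :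
    (P.getD k []).Pairwise (· < ·) := by
  by_cases hk : k < P.length
  · rw [List.getD_eq_getElem _ _ hk]
    exact List.isChain_iff_pairwise.1 (h.1 _ (List.getElem_mem hk))
  · rw [List.getD_eq_default _ _ (by omega)]
    simp

theorem SYT_len_le (n : ℕ) (P P' : List (List ℕ)) (h : IsSYTList n P) 
    (hr : ∀ k, P.getD k [] = P'.getD k []) : P.length ≤ P'.length := by
  by_contra hc
  have h1 := hr P'.length
  rw [List.getD_eq_getElem _ _ (by omega), List.getD_eq_default _ _ le_rfl] at h1
  exact h.2.2.1 (h1 ▸ List.getElem_mem _)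

theorem SYT_unique (n : ℕ) (P P' : List (List ℕ)) (h : IsSYTList n P) (h' : IsSYTList n P')
    (hr : ∀ x < n, rowOf P x = rowOf P' x) : P = P' := by
  have hrow : ∀ k, P.getD k [] = P'.getD k [] := by
    intro k
    have hp : (P.getD k []).Perm (P'.getD k []) := by
      rw [List.perm_ext_iff_of_nodup ((SYT_row_sorted n P h k).imp (fun h => h.ne))
        ((SYT_row_sorted n P' h' k).imp (fun h => h.ne))]
      intro x
      rw [SYT_row_mem n P h, SYT_row_mem n P' h']
      grind
    exact hp.eq_of_pairwise (fun a b _ _ h1 h2 => absurd h1 (by omega))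
      (SYT_row_sorted n P h k) (SYT_row_sorted n P' h' k)
  have hlen : P.length = P'.length :=
    le_antisymm (SYT_len_le n P P' h hrow) (SYT_len_le n P' P h' (fun k => (hrow k).symm))
  apply List.ext_getElem hlen
  intro k h1 h2
  have := hrow k
  rwa [List.getD_eq_getElem _ _ h1, List.getD_eq_getElem _ _ h2] at this

theorem countP_rows (r s : List ℕ) (j : ℕ) (hl : s.length ≤ r.length)
    (h : ∀ t < s.length, r.getD t 0 < s.getD t 0) :
    s.countP (fun x => decide (x < j + 1)) ≤ r.countP (fun x => decide (x < j)) := by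
  induction s generalizing r with
  | nil => simp
  | cons b s ih =>
    cases r with
    | nil => simp at hl
    | cons a r =>
      have h0 := h 0 (by simp)
      have := ih r (by simpa using hl) (fun t ht => by
        have := h (t+1) (by simpa using ht)
        simpa using this)
      simp only [List.getD_cons_zero] at h0
      simp only [List.countP_cons, decide_eq_true_eq]
      split_ifs <;> omega

theorem countP_succ (l : List ℕ) (hl : l.Nodup) (j : ℕ) :
    l.countP (fun x => decide (x < j + 1)) =
      l.countP (fun x => decide (x < j)) + if j ∈ l then 1 else 0 := by
  induction l with
  | nil => simp
  | cons a l ih =>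
    rw [List.nodup_cons] at hl
    simp only [List.countP_cons, ih hl.2, decide_eq_true_eq, List.mem_cons]
    grind

theorem SYT_cnt (n : ℕ) (P : List (List ℕ)) (h : IsSYTList n P) (k : ℕ) : ∀ j ≤ n,
    gcnt (fun x => some (rowOf P x)) j k = (P.getD k []).countP (fun x => decide (x < j)) := by
  intro j
  induction j with
  | zero => intro _; simp [gcnt]
  | succ j ih =>
    intro hj
    rw [countP_succ _ ((SYT_row_sorted n P h k).imp (fun h => h.ne)), gcnt, ih (by omega)]
    simp only [SYT_row_mem n P h, Option.some.injEq]
    have : j < n := by omega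
    simp [this]

theorem SYT_valid (n : ℕ) (P : List (List ℕ)) (h : IsSYTList n P) :
    gValid (fun x => some (rowOf P x)) n := by
  intro j hj k hk
  have hk' : rowOf P j = k + 1 := by simpa using hk
  have hm : j ∈ P.getD (k+1) [] := (SYT_row_mem n P h _ _).2 ⟨hj, hk'⟩
  have hlt : k + 1 < P.length := by
    by_contra hc
    rw [List.getD_eq_default _ _ (by omega)] at hm
    simp at hm
  have hch := (List.isChain_iff_getElem.1 h.2.1) k hlt
  have h1 := countP_rows _ _ j hch.1 hch.2
  have h2 : gcnt (fun x => some (rowOf P x)) (j+1) (k+1) ≤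
      gcnt (fun x => some (rowOf P x)) j k := by
    rw [SYT_cnt n P h _ _ (by omega), SYT_cnt n P h _ _ (by omega),
      List.getD_eq_getElem _ _ hlt, List.getD_eq_getElem _ _ (by omega)]
    exact h1
  simp only [gcnt, hk', if_true] at h2
  omega

theorem SYT_build (n : ℕ) (P : List (List ℕ)) (h : IsSYTList n P) :
    gB (fun x => some (rowOf P x)) n = P := by
  have hv := SYT_valid n P h
  have hS := gB_SYT _ n hv (by simp) n le_rfl
  apply SYT_unique n _ _ hS h
  intro x hx
  have := rowOf_gB _ n hv (by simp) x hx
  simpa using this.symm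

/-! ### Reversing the growth -/

theorem gstep_inj (x y : Prop) [Decidable x] [Decidable y] (a b c d : Option ℕ)
    (h : gstep x a b = gstep y c d) : a = c ∧ b = d := by
  rcases a with _ | a <;> rcases b with _ | b <;> rcases c with _ | c <;> rcases d with _ | d <;>
    simp only [gstep] at h <;> grind

theorem gcol_inj (v v' : ℕ) (r r' : ℕ → Option ℕ) (m : ℕ) (h : gS v r m = gS v' r' m)
    (hN : ∀ j < m, gN v r j = gN v' r' j) : ∀ j < m, r j = r' j := by
  induction m with
  | zero => intro j hj; omega
  | succ m ih =>
    have h1 := gstep_inj _ _ _ _ _ _ (Prod.ext (hN m (by omega)) h)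
    intro j hj
    rcases Nat.lt_succ_iff_lt_or_eq.1 hj with hj | rfl
    · exact ih h1.2 (fun j hj => hN j (by omega)) j hj
    · exact h1.1

theorem growth_inj (n : ℕ) (w w' : ℕ → ℕ) (m : ℕ) (hw : ∀ i < m, w i < n)
    (hinj : ∀ i < m, ∀ j < m, w i = w j → i = j)
    (hR : ∀ j < n, gR w m j = gR w' m j)
    (hS : ∀ i < m, gS (w i) (gR w i) n = gS (w' i) (gR w' i) n) : ∀ i < m, w i = w' i := by
  induction m with
  | zero => intro i hi; omega
  | succ m ih =>
    have h1 := gcol_inj _ _ _ _ n (hS m (by omega)) hR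
    have h2 := ih (fun i hi => hw i (by omega))
      (fun i hi j hj => hinj i (by omega) j (by omega)) h1 (fun i hi => hS i (by omega))
    intro i hi
    rcases Nat.lt_succ_iff_lt_or_eq.1 hi with hi | rfl
    · exact h2 i hi
    · have h3 : gR w i (w i) = none := by
        rw [gR_none]
        intro i' hi' he
        have := hinj i' (by omega) i (by omega) he
        omega
      have h4 := hR (w i) (hw i (by omega))
      have h5 : gR w (i+1) (w i) ≠ none := by
        simp only [gR, ne_eq, gN_none]
        simp
      rw [h4] at h5
      simp only [gR, ne_eq, gN_none] at h5
      rw [← h1 (w i) (hw i (by omega))] at h5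
      by_contra hc
      exact h5 ⟨h3, hc⟩

theorem gS_congr (v : ℕ) (r r' : ℕ → Option ℕ) (m : ℕ) (h : ∀ j < m, r j = r' j) :
    gS v r m = gS v r' m := by
  induction m with
  | zero => rfl
  | succ m ih => simp only [gS, h m (by omega), ih (fun j hj => h j (by omega))]

theorem gN_congr (v : ℕ) (r r' : ℕ → Option ℕ) (m : ℕ) (h : ∀ j ≤ m, r j = r' j) :
    gN v r m = gN v r' m := by
  simp only [gN, h m le_rfl, gS_congr v r r' m (fun j hj => h j hj.le)]

theorem gcnt_congr (r r' : ℕ → Option ℕ) (m k : ℕ) (h : ∀ j < m, r j = r' j) :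
    gcnt r m k = gcnt r' m k := by
  induction m with
  | zero => rfl
  | succ m ih => simp only [gcnt, h m (by omega), ih (fun j hj => h j (by omega))]

theorem gValid_congr (r r' : ℕ → Option ℕ) (m : ℕ) (h : ∀ j < m, r j = r' j)
    (hv : gValid r m) : gValid r' m := by
  intro j hj k hk
  rw [← h j hj] at hk
  have := hv j hj k hk
  rwa [gcnt_congr r r' j _ (fun i hi => h i (by omega)),
    gcnt_congr r r' j _ (fun i hi => h i (by omega))] at this

theorem gValid_succ (r : ℕ → Option ℕ) (m : ℕ) (hv : gValid r m)
    (h : ∀ k, r m = some (k+1) → gcnt r m (k+1) < gcnt r m k) : gValid r (m+1) := by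
  intro j hj
  rcases Nat.lt_succ_iff_lt_or_eq.1 hj with hj | rfl
  · exact hv j hj
  · exact h

theorem gback (r' : ℕ → Option ℕ) (m : ℕ) : ∀ k, gValid r' m →
    gcnt r' m (k+1) < gcnt r' m k → ∃ v < m, ∃ r : ℕ → Option ℕ, r v = none ∧
      gS v r m = some k ∧ (∀ j < m, gN v r j = r' j) ∧ gValid r m := by
  induction m with
  | zero => intro k _ h; simp [gcnt] at h
  | succ m ih =>
    intro k hv hk
    have hvm : gValid r' m := fun j hj => hv j (by omega)
    -- extension of a solution below `m` by a label `t`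
    have ext : ∀ (q : ℕ) (t : Option ℕ), gcnt r' m (q+1) < gcnt r' m q →
        gstep False t (some q) = (r' m, some k) →
        (∀ p, t = some (p+1) → q ≠ p + 1 → 
          gcnt r' m (p+1) < gcnt r' m p + if q = p then (-1:ℤ) else 0) →
        ∃ v < m + 1, ∃ r : ℕ → Option ℕ, r v = none ∧
          gS v r (m+1) = some k ∧ (∀ j < m + 1, gN v r j = r' j) ∧ gValid r (m+1) := by
      intro q t hq hst ht
      obtain ⟨v, hvlt, r0, h1, h2, h3, h4⟩ := ih q hvm hq
      have hag : ∀ j < m, r0 j = (fun j => if j = m then t else r0 j) j := by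
        intro j hj
        have : j ≠ m := by omega
        simp [this]
      have hS : gS v (fun j => if j = m then t else r0 j) m = some q := by
        rw [← gS_congr v r0 _ m hag, h2]
      have hne : (v = m) = False := by simp; omega
      have hval := gValid_congr _ _ m hag h4
      have hst' : gstep (v = m) t (some q) = (r' m, some k) := by
        rw [← hst]
        cases t <;> simp [gstep]
      have hN : ∀ j < m, gN v (fun j => if j = m then t else r0 j) j = r' j := by
        intro j hj
        rw [← h3 j hj]
        exact (gN_congr v r0 _ j (fun i hi => hag i (by omega))).symm
      refine ⟨v, by omega, fun j => if j = m then t else r0 j, ?_, ?_, ?_, ?_⟩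
      · have : v ≠ m := by omega
        simpa [this] using h1
      · simp only [gS, hS]
        simp only [if_true]
        rw [hst']
      · intro j hj
        rcases Nat.lt_succ_iff_lt_or_eq.1 hj with hj | rfl
        · exact hN j hj
        · simp only [gN, hS, if_true]
          rw [hst']
      · apply gValid_succ _ _ hval
        intro p hp
        simp only [if_true] at hp
        obtain ⟨hc1, hc2⟩ := gcol v m _ hval m le_rfl
        have e1 := hc1 p
        have e2 := hc1 (p+1)
        have e3 := hc2 p
        rw [gcnt_congr _ r' m _ hN] at e1 e2
        rw [hS] at e1 e2 e3
        by_cases hqp : q = p + 1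
        · exact e3 (by rw [hqp])
        · have e4 := ht p hp hqp
          simp only [Option.some.injEq, hqp, if_false] at e1 e2
          split_ifs at e1 e4 <;> omega
    have hk' := hk
    simp only [gcnt] at hk'
    by_cases ht : r' m = some k
    · rw [ht] at hk'
      cases k with
      | zero =>
        have hag : ∀ j < m, r' j = (fun j => if j = m then none else r' j) j := by
          intro j hj
          have : j ≠ m := by omega
          simp [this]
        have hself := gN_self m (fun j => if j = m then none else r' j) (by simp)
        refine ⟨m, by omega, fun j => if j = m then none else r' j, by simp, hself.2, ?_, ?_⟩
        · intro j hj
          rcases Nat.lt_succ_iff_lt_or_eq.1 hj with hj | rfl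
          · rw [gN_lt _ _ _ hj]; exact (hag j hj).symm
          · rw [hself.1, ht]
        · apply gValid_succ _ _ (gValid_congr _ _ m hag hvm)
          simp
      | succ q =>
        have := hv m (by omega) q ht
        refine ext q (some q) this (by simp [gstep, ht]) ?_
        intro p hp hqp
        simp only [Option.some.injEq] at hp
        omega
    · rw [if_neg ht] at hk'
      refine ext k (r' m) (by omega) ?_ ?_
      · rcases hr : r' m with _ | a
        · simp [gstep]
        · have : a ≠ k := by rintro rfl; exact ht hr
          simp [gstep, this]
      · intro p hp hqp
        have := hv m (by omega) p hp
        split_ifs with hqp'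
        · subst hqp'
          rw [if_pos hp] at hk'
          omega
        · omega

theorem gcnt_pos (r : ℕ → Option ℕ) (n j k : ℕ) (hj : j < n) (h : r j = some k) :
    0 < gcnt r n k := by
  induction n with
  | zero => omega
  | succ n ih =>
    simp only [gcnt]
    rcases Nat.lt_succ_iff_lt_or_eq.1 hj with hj | rfl
    · have := ih hj; omega
    · simp [h]

theorem gR_congr (w w' : ℕ → ℕ) (i : ℕ) (h : ∀ j < i, w j = w' j) : gR w i = gR w' i := by
  induction i with
  | zero => rfl
  | succ i ih => simp only [gR, h i (by omega), ih (fun j hj => h j (by omega))]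

theorem growth_surj (n : ℕ) (s : ℕ → Option ℕ) (i : ℕ) : ∀ (r : ℕ → Option ℕ), gValid r n →
    gValid s i → (∀ j < i, s j ≠ none) → (∀ k, gcnt r n k = gcnt s i k) →
    ∃ w : ℕ → ℕ, (∀ j < i, w j < n) ∧ (∀ j < i, ∀ j' < i, w j = w j' → j = j') ∧
      (∀ j < n, gR w i j = r j) ∧ ∀ j < i, gS (w j) (gR w j) n = s j := by
  induction i with
  | zero =>
    intro r _ _ _ hc
    refine ⟨fun _ => 0, by simp, by simp, ?_, by simp⟩
    intro j hj
    rcases h : r j with _ | k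
    · simp [gR]
    · have := gcnt_pos r n j k hj h
      rw [hc] at this
      simp [gcnt] at this
  | succ i ih =>
    intro r hr hs hall hc
    obtain ⟨k, hk⟩ := Option.ne_none_iff_exists'.1 (hall i (by omega))
    have hsi : gValid s i := fun j hj => hs j (by omega)
    have hanti := gcnt_anti s i hsi i le_rfl k
    obtain ⟨v, hv, r0, h1, h2, h3, h4⟩ := gback r n k hr (by
      rw [hc, hc]
      simp only [gcnt, hk]
      simp
      omega)
    obtain ⟨w, hw1, hw2, hw3, hw4⟩ := ih r0 h4 hsi (fun j hj => hall j (by omega)) (by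
      intro q
      have e1 := (gcol v n r0 h4 n le_rfl).1 q
      rw [gcnt_congr _ r n q h3, hc, h2] at e1
      simp only [gcnt, hk] at e1
      omega)
    have hag : ∀ j < i, w j = (fun j => if j = i then v else w j) j := by
      intro j hj
      have : j ≠ i := by omega
      simp [this]
    have hfresh : ∀ j < i, w j ≠ v := by
      rw [← gR_none, hw3 v hv, h1]
    have hS : gS v (gR w i) n = some k := by
      rw [gS_congr v _ r0 n hw3, h2]
    refine ⟨fun j => if j = i then v else w j, ?_, ?_, ?_, ?_⟩
    · intro j hj
      by_cases hji : j = i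
      · simp [hji, hv]
      · simpa [hji] using hw1 j (by omega)
    · intro j hj j' hj' he
      by_cases hji : j = i <;> by_cases hji' : j' = i
      · omega
      · simp only [hji, hji', if_true, if_false] at he
        exact absurd he.symm (hfresh j' (by omega))
      · simp only [hji, hji', if_true, if_false] at he
        exact absurd he (hfresh j (by omega))
      · simp only [hji, hji', if_false] at he
        exact hw2 j (by omega) j' (by omega) he
    · intro j hj
      simp only [gR, if_true]
      rw [← gR_congr w _ i hag, ← h3 j hj]
      exact gN_congr v _ _ j (fun j' hj' => hw3 j' (by omega))
    · intro j hj
      rw [← gR_congr w _ j (fun j' hj' => hag j' (by omega))]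
      by_cases hji : j = i
      · subst hji
        simp only [if_true]
        rw [hS, hk]
      · simp only [hji, if_false]
        exact hw4 j (by omega)

/-! ### Permutations -/

def extPerm {n : ℕ} (π : Equiv.Perm (Fin n)) (i : ℕ) : ℕ := if h : i < n then π ⟨i, h⟩ else i

theorem extPerm_lt {n : ℕ} (π : Equiv.Perm (Fin n)) : ∀ i < n, extPerm π i < n := by
  intro i hi
  simp [extPerm, hi]

theorem extPerm_inv {n : ℕ} (π : Equiv.Perm (Fin n)) :
    ∀ i < n, ∀ j < n, (extPerm π i = j ↔ extPerm π⁻¹ j = i) := by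
  intro i hi j hj
  simp only [extPerm, hi, hj, dif_pos]
  have : (π ⟨i, hi⟩ = ⟨j, hj⟩) ↔ (π⁻¹ ⟨j, hj⟩ = ⟨i, hi⟩) := by
    rw [Equiv.Perm.inv_eq_iff_eq, eq_comm]
  simpa [Fin.ext_iff] using this

theorem extPerm_inj {n : ℕ} (π : Equiv.Perm (Fin n)) :
    ∀ i < n, ∀ j < n, extPerm π i = extPerm π j → i = j := by
  intro i hi j hj h
  have h1 := (extPerm_inv π i hi _ (extPerm_lt π j hj)).1 h
  have h2 := (extPerm_inv π j hj _ (extPerm_lt π j hj)).1 rfl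
  omega

theorem permWord_eq {n : ℕ} (π : Equiv.Perm (Fin n)) :
    permWord π = (List.range n).map (extPerm π) := by
  apply List.ext_getElem
  · simp [permWord]
  · intro i h1 h2
    have hi : i < n := by simpa [permWord] using h1
    simp [permWord, extPerm, hi]

theorem rsk_perm {n : ℕ} (π : Equiv.Perm (Fin n)) :
    rsk (permWord π) = (gB (gR (extPerm π) n) n,
      gB (fun i => gS (extPerm π i) (gR (extPerm π) i) n) n) := by
  rw [permWord_eq]
  exact rsk_eq n _ (extPerm_lt π) (extPerm_inj π)

theorem gR_S {n : ℕ} (π : Equiv.Perm (Fin n)) (j : ℕ) (hj : j < n) :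
    gR (extPerm π) n j = gS (extPerm π⁻¹ j) (gR (extPerm π⁻¹) j) n :=
  growth_symm n _ _ (extPerm_inv π) n le_rfl j hj

theorem rsk_snd {n : ℕ} (π : Equiv.Perm (Fin n)) :
    (rsk (permWord π)).2 = (rsk (permWord π⁻¹)).1 := by
  rw [rsk_perm, rsk_perm]
  apply gB_congr
  intro j hj
  have := gR_S π⁻¹ j hj
  rw [inv_inv] at this
  exact this.symm

theorem rsk_inv {n : ℕ} (π : Equiv.Perm (Fin n)) :
    rsk (permWord π⁻¹) = ((rsk (permWord π)).2, (rsk (permWord π)).1) := by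
  apply Prod.ext
  · exact (rsk_snd π).symm
  · have := rsk_snd π⁻¹
    rwa [inv_inv] at this

theorem gR_all {n : ℕ} (π : Equiv.Perm (Fin n)) : ∀ j < n, gR (extPerm π) n j ≠ none := by
  intro j hj h
  rw [gR_none] at h
  have h1 := (extPerm_inv π _ (extPerm_lt π⁻¹ j hj) j hj).2 rfl
  exact h _ (extPerm_lt π⁻¹ j hj) h1

theorem rsk_SYT {n : ℕ} (π : Equiv.Perm (Fin n)) : IsSYTList n (rsk (permWord π)).1 := by
  rw [rsk_perm]
  exact gB_SYT _ n (gValid_R _ n n) (gR_all π) n le_rfl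

theorem rsk_inj {n : ℕ} (π σ : Equiv.Perm (Fin n))
    (h1 : (rsk (permWord π)).1 = (rsk (permWord σ)).1)
    (h2 : (rsk (permWord π)).2 = (rsk (permWord σ)).2) : π = σ := by
  have key : ∀ (π σ : Equiv.Perm (Fin n)), (rsk (permWord π)).1 = (rsk (permWord σ)).1 →
      ∀ j < n, gR (extPerm π) n j = gR (extPerm σ) n j := by
    intro π σ h j hj
    rw [rsk_perm, rsk_perm] at h
    simp only at h
    rw [rowOf_gB _ n (gValid_R _ n n) (gR_all π) j hj,
      rowOf_gB _ n (gValid_R _ n n) (gR_all σ) j hj, h]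
  have hR := key π σ h1
  have hS := key π⁻¹ σ⁻¹ (by rw [← rsk_snd, ← rsk_snd, h2])
  have := growth_inj n (extPerm π) (extPerm σ) n (extPerm_lt π) (extPerm_inj π) hR (by
    intro i hi
    have e1 := gR_S π⁻¹ i hi
    have e2 := gR_S σ⁻¹ i hi
    rw [inv_inv] at e1 e2
    rw [← e1, ← e2, hS i hi])
  ext ⟨i, hi⟩
  have := this i hi
  simpa [extPerm, hi] using this

theorem rsk_surj (n : ℕ) (P : List (List ℕ)) (h : IsSYTList n P) :
    ∃ π : Equiv.Perm (Fin n), rsk (permWord π) = (P, P) := by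
  have hv := SYT_valid n P h
  obtain ⟨w, h1, h2, h3, h4⟩ := growth_surj n (fun x => some (rowOf P x)) n
    (fun x => some (rowOf P x)) hv hv (by simp) (fun _ => rfl)
  have hinj : Function.Injective (fun i : Fin n => (⟨w i, h1 i i.2⟩ : Fin n)) := by
    intro a b hab
    simp only [Fin.mk.injEq] at hab
    exact Fin.ext (h2 a a.2 b b.2 hab)
  refine ⟨Equiv.ofBijective _ (Finite.injective_iff_bijective.1 hinj), ?_⟩
  have hw : permWord (Equiv.ofBijective _ (Finite.injective_iff_bijective.1 hinj)) =
      (List.range n).map w := by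
    apply List.ext_getElem
    · simp [permWord]
    · intro i _ _
      simp [permWord]
  rw [hw, rsk_eq n w h1 h2, gB_congr _ _ n h3, gB_congr _ _ n h4, SYT_build n P h]

/-- Under the Robinson–Schensted correspondence `π ↦ (P(π), Q(π))`:
`π⁻¹ ↦ (Q(π), P(π))`; consequently involutions `π` (i.e. `π² = 1`) have `P(π) = Q(π)`
and correspond bijectively, via `π ↦ P(π)`, to single standard Young tableaux. -/
theorem RS_inverse_swaps_and_involutions_biject_with_SYT (n : ℕ) :
    (∀ π : Equiv.Perm (Fin n),
        rsk (permWord π⁻¹) = ((rsk (permWord π)).2, (rsk (permWord π)).1)) ∧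
    (∀ π : Equiv.Perm (Fin n), π ^ 2 = 1 → (rsk (permWord π)).2 = (rsk (permWord π)).1) ∧
    Set.BijOn (fun π : Equiv.Perm (Fin n) => (rsk (permWord π)).1)
      {π | π ^ 2 = 1} {P | IsSYTList n P} := by
  have hsq : ∀ π : Equiv.Perm (Fin n), π ^ 2 = 1 → π⁻¹ = π := by
    intro π h
    rw [inv_eq_iff_mul_eq_one, ← sq, h]
  have h2 : ∀ π : Equiv.Perm (Fin n), π ^ 2 = 1 →
      (rsk (permWord π)).2 = (rsk (permWord π)).1 := by
    intro π h
    rw [rsk_snd, hsq π h]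
  refine ⟨rsk_inv, h2, ?_, ?_, ?_⟩
  · intro π _
    exact rsk_SYT π
  · intro π hπ σ hσ h
    exact rsk_inj π σ h (by rw [h2 π hπ, h2 σ hσ]; exact h)
  · intro P hP
    obtain ⟨π, hπ⟩ := rsk_surj n P hP
    refine ⟨π, ?_, by simp [hπ]⟩
    have h3 := rsk_inv π
    rw [hπ] at h3
    have h4 : π⁻¹ = π := rsk_inj _ _ (by rw [h3, hπ]) (by rw [h3, hπ])
    show π ^ 2 = 1
    rw [sq]
    nth_rewrite 1 [← h4]
    simp
end

section
/- An involution π ∈ S_n has no fixed points if and only if all columns of its Robinson–Schensted shape have even length; more generally, if π² = id and π has exactly k fixed points, then the insertion tableau P has exactly k columns of odd length. -/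
/-- The Robinson–Schensted insertion tableau `P(π)`. -/
def rsP {n : ℕ} (π : Equiv.Perm (Fin n)) : List (List ℕ) :=
  (permWord π).foldl insertTab []

/-- The length of the `j`-th column of a tableau given as a list of rows. -/
def colLen (P : List (List ℕ)) (j : ℕ) : ℕ :=
  (P.filter fun r => j < r.length).length

namespace RSInv

/-- Tableau after processing times `< i` of the partial word `f`. -/
def T (f : ℕ → Option ℕ) : ℕ → List (List ℕ)
  | 0 => []
  | i + 1 => match f i with
    | none => T f i
    | some v => insertTab (T f i) v

/-- First row after processing times `< i`. -/
def R (f : ℕ → Option ℕ) : ℕ → List ℕ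
  | 0 => []
  | i + 1 => match f i with
    | none => R f i
    | some v => (insertRow (R f i) v).1

/-- The partial word of bumped values. -/
def skel (f : ℕ → Option ℕ) (i : ℕ) : Option ℕ :=
  match f i with
  | none => none
  | some v => (insertRow (R f i) v).2

/-- Number of entries less than `j`. -/
def cnt (r : List ℕ) (j : ℕ) : ℕ := r.countP (fun a => decide (a < j))

/-- Symmetric partial words. -/
def Symm (f : ℕ → Option ℕ) : Prop := ∀ i j, f i = some j → f j = some i

lemma T_zero (f) : T f 0 = [] := rfl
lemma T_none {f : ℕ → Option ℕ} {i} (h : f i = none) : T f (i+1) = T f i := by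
  simp [T, h]
lemma T_some {f : ℕ → Option ℕ} {i v} (h : f i = some v) :
    T f (i+1) = insertTab (T f i) v := by
  simp [T, h]
lemma R_none {f : ℕ → Option ℕ} {i} (h : f i = none) : R f (i+1) = R f i := by
  simp [R, h]
lemma R_some {f : ℕ → Option ℕ} {i v} (h : f i = some v) :
    R f (i+1) = (insertRow (R f i) v).1 := by
  simp [R, h]
lemma skel_none {f : ℕ → Option ℕ} {i} (h : f i = none) : skel f i = none := by
  simp [skel, h]
lemma skel_some {f : ℕ → Option ℕ} {i v} (h : f i = some v) :
    skel f i = (insertRow (R f i) v).2 := by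
  simp [skel, h]

lemma T_eq (f : ℕ → Option ℕ) (i : ℕ) :
    T f i = R f i :: T (skel f) i ∨
    (T f i = [] ∧ R f i = [] ∧ T (skel f) i = [] ∧ ∀ k < i, f k = none) := by
  induction i with
  | zero => right; simp [T, R]
  | succ i ih =>
    cases hf : f i with
    | none =>
      rw [T_none hf, R_none hf, T_none (skel_none hf)]
      rcases ih with h | ⟨h1, h2, h3, h4⟩
      · exact Or.inl h
      · refine Or.inr ⟨h1, h2, h3, fun k hk => ?_⟩
        rcases Nat.lt_succ_iff_lt_or_eq.1 hk with h | h
        · exact h4 k h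
        · rw [h, hf]
    | some v =>
      left
      have hs := skel_some hf
      rw [T_some hf, R_some hf]
      rcases ih with h | ⟨h1, h2, h3, h4⟩
      · rw [h, insertTab]
        cases hb : insertRow (R f i) v with
        | mk r' b =>
          rw [hb] at hs
          cases b with
          | none => rw [T_none hs]
          | some w => rw [T_some hs]
      · rw [h2] at hs
        rw [h1, h2, T_none (by rw [hs]; rfl), h3]; rfl

lemma mem_insertRow (r : List ℕ) (v a : ℕ) (h : a ∈ (insertRow r v).1) : a = v ∨ a ∈ r := by
  induction r with
  | nil => simpa [insertRow] using h
  | cons b r ih =>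
    rw [insertRow] at h
    split_ifs at h <;> simp at h ⊢ <;> tauto

lemma bump_mem (r : List ℕ) (v w : ℕ) (h : (insertRow r v).2 = some w) : w ∈ r ∧ v < w := by
  induction r with
  | nil => simp [insertRow] at h
  | cons b r ih =>
    rw [insertRow] at h
    split_ifs at h with hv
    · simp at h; subst h; simp [hv]
    · have := ih h
      simp [this]

lemma sorted_insertRow (r : List ℕ) (v : ℕ) (hr : r.Pairwise (· < ·)) (hv : v ∉ r) :
    (insertRow r v).1.Pairwise (· < ·) := by
  induction r with
  | nil => simp [insertRow]
  | cons b r ih =>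
    rw [List.pairwise_cons] at hr
    simp at hv
    rw [insertRow]
    split_ifs with h
    · rw [List.pairwise_cons]
      exact ⟨fun a ha => h.trans (hr.1 a ha), hr.2⟩
    · rw [List.pairwise_cons]
      refine ⟨fun a ha => ?_, ih hr.2 hv.2⟩
      rcases mem_insertRow r v a ha with h' | h'
      · omega
      · exact hr.1 a h'

lemma bump_min (r : List ℕ) (v a : ℕ) (hr : r.Pairwise (· < ·)) (ha : a ∈ r) (hv : v < a) :
    ∃ w, (insertRow r v).2 = some w ∧ w ≤ a := by
  induction r with
  | nil => simp at ha
  | cons b r ih =>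
    rw [List.pairwise_cons] at hr
    rw [insertRow]
    split_ifs with h
    · refine ⟨b, rfl, ?_⟩
      rcases List.mem_cons.1 ha with h' | h'
      · omega
      · exact (hr.1 a h').le
    · rcases List.mem_cons.1 ha with h' | h'
      · omega
      · exact ih hr.2 h'

lemma cnt_insertRow (r : List ℕ) (v j : ℕ) :
    cnt (insertRow r v).1 j =
      cnt r j + if v < j ∧ ∀ w, (insertRow r v).2 = some w → j ≤ w then 1 else 0 := by
  unfold cnt
  induction r with
  | nil => simp [insertRow, List.countP_cons]
  | cons b r ih =>
    rw [insertRow]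
    split_ifs with h h1 h1
    · simp [List.countP_cons] at h1 ⊢
      grind
    · simp [List.countP_cons] at h1 ⊢
      grind
    · simp only [List.countP_cons, ih]
      rw [if_pos h1]; omega
    · simp only [List.countP_cons, ih]
      rw [if_neg h1]; omega

lemma cnt_succ (r : List ℕ) (j : ℕ) (hr : r.Pairwise (· < ·)) :
    cnt r (j+1) = cnt r j + if j ∈ r then 1 else 0 := by
  unfold cnt
  induction r with
  | nil => simp
  | cons b r ih =>
    rw [List.pairwise_cons] at hr
    have := hr.1 j
    simp only [List.countP_cons, ih hr.2, List.mem_cons, decide_eq_true_eq]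
    grind

lemma cnt_mono (r : List ℕ) {j k : ℕ} (h : j ≤ k) : cnt r j ≤ cnt r k := by
  unfold cnt
  apply List.countP_mono_left
  intro x _; simp; omega

lemma mem_R {f : ℕ → Option ℕ} {i a : ℕ} (h : a ∈ R f i) : ∃ k < i, f k = some a := by
  induction i with
  | zero => simp [R] at h
  | succ i ih =>
    cases hf : f i with
    | none =>
      rw [R_none hf] at h
      obtain ⟨k, hk, h⟩ := ih h
      exact ⟨k, by omega, h⟩
    | some v =>
      rw [R_some hf] at h
      rcases mem_insertRow _ _ _ h with h | h
      · exact ⟨i, by omega, by rw [hf, h]⟩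
      · obtain ⟨k, hk, h⟩ := ih h
        exact ⟨k, by omega, h⟩

lemma not_mem_R {f : ℕ → Option ℕ} (hs : Symm f) {i v : ℕ} (h : f i = some v) : v ∉ R f i := by
  intro hv
  obtain ⟨k, hk, h'⟩ := mem_R hv
  have h1 := hs _ _ h
  have h2 := hs _ _ h'
  rw [h1] at h2
  simp at h2; omega

lemma sorted_R {f : ℕ → Option ℕ} (hs : Symm f) (i : ℕ) : (R f i).Pairwise (· < ·) := by
  induction i with
  | zero => simp [R]
  | succ i ih =>
    cases hf : f i with
    | none => rwa [R_none hf]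
    | some v =>
      rw [R_some hf]
      exact sorted_insertRow _ _ ih (not_mem_R hs hf)

/-- The rank function. -/
def c (f : ℕ → Option ℕ) (i j : ℕ) : ℕ := cnt (R f i) j

lemma c_none {f : ℕ → Option ℕ} {i} (h : f i = none) (j) : c f (i+1) j = c f i j := by
  simp [c, R_none h]

lemma c_some {f : ℕ → Option ℕ} {i v} (h : f i = some v) (j) :
    c f (i+1) j = c f i j + if v < j ∧ ∀ w, skel f i = some w → j ≤ w then 1 else 0 := by
  rw [c, c, R_some h, skel_some h, cnt_insertRow]

lemma c_succ {f : ℕ → Option ℕ} (hs : Symm f) (i j) :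
    c f i (j+1) = c f i j + if j ∈ R f i then 1 else 0 := cnt_succ _ _ (sorted_R hs i)

lemma skel_mem {f : ℕ → Option ℕ} {i v w} (h : f i = some v) (hw : skel f i = some w) :
    w ∈ R f i ∧ v < w := bump_mem _ _ _ (by rw [← skel_some h, hw])

lemma skel_min {f : ℕ → Option ℕ} (hs : Symm f) {i v a} (h : f i = some v) (ha : a ∈ R f i)
    (hv : v < a) : ∃ w, skel f i = some w ∧ w ≤ a := by
  rw [skel_some h]; exact bump_min _ _ _ (sorted_R hs i) ha hv

lemma c_rec {f : ℕ → Option ℕ} (hs : Symm f) (i j) :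
    c f (i+1) (j+1) = if f i = some j then c f i j + 1
      else max (c f i (j+1)) (c f (i+1) j) := by
  have hj := c_succ hs i j
  cases hf : f i with
  | none => simp [c_none hf, hj]
  | some v =>
    have e1 := c_some hf (j+1)
    have e2 := c_some hf j
    have hv := not_mem_R hs hf
    have hm := fun a => skel_min hs (a := a) hf
    have hb := fun w => skel_mem (w := w) hf
    rw [e1, e2, hj]
    cases hk : skel f i with
    | none =>
      have : ∀ a, a ∈ R f i → a ≤ v := by
        intro a ha
        by_contra hc
        obtain ⟨w, hw, _⟩ := hm a ha (by omega)
        simp [hk] at hw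
      have := this j
      simp
      grind
    | some w =>
      have hw := hb w hk
      have : ∀ a, a ∈ R f i → v < a → w ≤ a := by
        intro a ha hva
        obtain ⟨w', hw', h⟩ := hm a ha hva
        simp [hk] at hw'; omega
      have := this j
      simp
      grind

lemma c_symm {f : ℕ → Option ℕ} (hs : Symm f) : ∀ i j, c f i j = c f j i := by
  have h0 : ∀ i, c f i 0 = 0 := by intro i; simp [c, cnt]
  have h0' : ∀ i, c f 0 i = 0 := by intro i; simp [c, cnt, R]
  intro i
  induction i with
  | zero => intro j; rw [h0, h0']
  | succ i ih =>
    intro j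
    induction j with
    | zero => rw [h0, h0']
    | succ j ih' =>
      rw [c_rec hs, c_rec hs, ih, ih', ih (j+1), max_comm]
      have : f i = some j ↔ f j = some i := ⟨hs _ _, hs _ _⟩
      simp only [this]

lemma skel_iff {f : ℕ → Option ℕ} (hs : Symm f) (i j) :
    skel f i = some j ↔ c f i (j+1) = c f i j + 1 ∧ c f (i+1) (j+1) = c f (i+1) j := by
  have hj := c_succ hs i j
  cases hf : f i with
  | none => simp [c_none hf, skel_none hf]; omega
  | some v =>
    have e1 := c_some hf (j+1)
    have e2 := c_some hf j
    have hv := not_mem_R hs hf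
    have hb := fun w => skel_mem (w := w) hf
    rw [e1, e2, hj]
    cases hk : skel f i with
    | none => simp; grind
    | some w =>
      have hw := hb w hk
      simp
      grind

lemma c_mono_right (f i) {j k} (h : j ≤ k) : c f i j ≤ c f i k := cnt_mono _ h

lemma skel_symm {f : ℕ → Option ℕ} (hs : Symm f) : Symm (skel f) := by
  intro i j h
  rw [skel_iff hs] at h ⊢
  rw [c_symm hs j (i+1), c_symm hs j i, c_symm hs (j+1) (i+1), c_symm hs (j+1) i]
  have h1 := c_symm hs i (j+1)
  have h2 : c f i (j+1) ≤ c f (i+1) (j+1) := by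
    rw [c_symm hs i, c_symm hs (i+1)]; exact c_mono_right _ _ (by omega)
  have h3 : c f (i+1) j ≤ c f i j + 1 := by
    rw [c_symm hs _ j, c_symm hs _ j, c_succ hs]; split_ifs <;> omega
  omega

lemma diag {f : ℕ → Option ℕ} (hs : Symm f) (i) :
    c f i i = (Finset.range i).card.rec 0 (fun k s => s + (if f k = some k then 1 else 0)
      + (if skel f k = some k then 1 else 0)) := by
  rw [Finset.card_range]
  induction i with
  | zero => simp [c, cnt]
  | succ i ih =>
    simp only [← ih]
    rw [c_rec hs]
    have h1 := skel_iff hs i i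
    have h2 := c_symm hs i (i+1)
    have h3 := c_rec hs i i
    have h4 := c_succ hs i i
    by_cases hf : f i = some i
    · have : skel f i ≠ some i := by
        intro h; have := skel_mem hf h; omega
      simp [hf, this]
    · rw [if_neg hf] at h3
      simp only [hf, if_false, h1]
      split_ifs at h4 ⊢ <;> omega

/-- Number of fixed points below `n`. -/
def fixc (f : ℕ → Option ℕ) (n : ℕ) : ℕ :=
  ((Finset.range n).filter fun i => f i = some i).card

lemma fixc_succ (f n) : fixc f (n+1) = fixc f n + if f n = some n then 1 else 0 := by
  unfold fixc
  rw [Finset.range_add_one, Finset.filter_insert]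
  split_ifs <;> simp

lemma diag_fix {f : ℕ → Option ℕ} (hs : Symm f) (n) :
    c f n n = fixc f n + fixc (skel f) n := by
  rw [diag hs, Finset.card_range]
  induction n with
  | zero => simp [fixc]
  | succ n ih => simp only [fixc_succ, ih]; omega

lemma length_R {f : ℕ → Option ℕ} (hs : Symm f) {n} (hn : ∀ i, n ≤ i → f i = none) :
    (R f n).length = fixc f n + fixc (skel f) n := by
  rw [← diag_fix hs, c, cnt, eq_comm, List.countP_eq_length]
  intro a ha
  obtain ⟨k, hk, h⟩ := mem_R ha
  by_contra hc
  have := hn a (by simpa using hc)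
  rw [hs _ _ h] at this
  simp at this

lemma c_skel_le {f : ℕ → Option ℕ} (hs : Symm f) (i) : ∀ j, c (skel f) i j ≤ c f i j := by
  have hs' := skel_symm hs
  induction i with
  | zero => simp [c, cnt, R]
  | succ i ih =>
    intro j
    cases hf : f i with
    | none => rw [c_none hf, c_none (skel_none hf)]; exact ih j
    | some v =>
      have e1 := c_some hf j
      cases hk : skel f i with
      | none =>
        rw [c_none hk, e1]; have := ih j; omega
      | some w =>
        have e2 := c_some hk j
        rw [e2]
        have := ih j
        split_ifs with h
        · have hw := skel_mem hf hk
          have h1 : c (skel f) i j = c (skel f) i w := by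
            have key : ∀ d, w + d ≤ j → c (skel f) i (w + d) = c (skel f) i w := by
              intro d
              induction d with
              | zero => simp
              | succ d ihd =>
                intro hd
                rw [← add_assoc, c_succ hs', ihd (by omega), if_neg, add_zero]
                intro hm
                rcases Nat.eq_zero_or_pos d with h0 | h0
                · subst h0
                  exact not_mem_R hs' hk hm
                · obtain ⟨w', hw', hle⟩ := skel_min hs' hk hm (by omega)
                  have := h.2 w' hw'
                  omega
            have := key (j - w) (by omega)
            rwa [Nat.add_sub_cancel' (by omega)] at this
          have h2 := c_succ hs i w
          rw [if_pos hw.1] at h2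
          have h3 := c_mono_right f i (show w + 1 ≤ j by omega)
          have h4 := ih w
          omega
        · omega

lemma length_skel_le {f : ℕ → Option ℕ} (hs : Symm f) (n) :
    (R (skel f) n).length ≤ (R f n).length := by
  obtain ⟨M, hM⟩ : ∃ M, ∀ a ∈ R (skel f) n, a < M := by
    refine ⟨(R (skel f) n).sum + 1, fun a ha => ?_⟩
    have := List.single_le_sum (l := R (skel f) n) (by simp) a ha
    omega
  have h := c_skel_le hs n M
  have h1 : c (skel f) n M = (R (skel f) n).length := by
    rw [c, cnt, List.countP_eq_length]; simpa using hM
  have h2 : c f n M ≤ (R f n).length := List.countP_le_length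
  omega

lemma colLen_cons (r : List ℕ) (P j) :
    colLen (r :: P) j = colLen P j + if j < r.length then 1 else 0 := by
  unfold colLen
  rw [List.filter_cons]
  split_ifs <;> simp_all

lemma main (n m : ℕ) : ∀ f : ℕ → Option ℕ, Symm f → (∀ i, n ≤ i → f i = none) →
    (T f n).length = m →
    (∀ j, (R f n).length ≤ j → colLen (T f n) j = 0) ∧
    ((Finset.range (R f n).length).filter fun j => Odd (colLen (T f n) j)).card = fixc f n := by
  induction m with
  | zero =>
    intro f hs hn hT
    rcases T_eq f n with h | ⟨h1, h2, h3, h4⟩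
    · rw [h] at hT; simp at hT
    · rw [h1, h2]
      refine ⟨by simp [colLen], ?_⟩
      simp only [fixc]
      symm
      simp only [List.length_nil, Finset.range_zero, Finset.filter_empty, Finset.card_empty,
        Finset.card_eq_zero, Finset.filter_eq_empty_iff, Finset.mem_range]
      intro i hi
      simp [h4 i hi]
  | succ m ih =>
    intro f hs hn hT
    rcases T_eq f n with h | ⟨h1, h2, h3, h4⟩
    swap
    · rw [h1] at hT; simp at hT
    have hs' := skel_symm hs
    obtain ⟨a1, a2⟩ := ih (skel f) hs' (fun i hi => skel_none (hn i hi))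
      (by rw [h] at hT; simpa using hT)
    have hle := length_skel_le hs n
    have hlen := length_R hs hn
    rw [h]
    refine ⟨fun j hj => ?_, ?_⟩
    · rw [colLen_cons, a1 j (by omega), if_neg (by omega)]
    · have e1 : ((Finset.range (R f n).length).filter
          fun j => Odd (colLen (T (skel f) n) j)).card = fixc (skel f) n := by
        rw [← a2]
        congr 1
        ext j
        simp only [Finset.mem_filter, Finset.mem_range]
        constructor
        · rintro ⟨h1, h2⟩
          refine ⟨?_, h2⟩
          by_contra hc
          rw [a1 j (by omega)] at h2
          simp at h2
        · rintro ⟨h1, h2⟩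
          exact ⟨by omega, h2⟩
      have e2 : ((Finset.range (R f n).length).filter
          fun j => Odd (colLen (R f n :: T (skel f) n) j)) =
          (Finset.range (R f n).length).filter
          fun j => ¬ Odd (colLen (T (skel f) n) j) := by
        apply Finset.filter_congr
        intro j hj
        rw [colLen_cons, if_pos (Finset.mem_range.1 hj), Nat.odd_add_one]
      have e3 := Finset.card_filter_add_card_filter_not (s := Finset.range (R f n).length)
        (fun j => Odd (colLen (T (skel f) n) j))
      rw [Finset.card_range] at e3
      rw [e2]
      omega

/-- The partial word of a permutation. -/
def pf {n : ℕ} (π : Equiv.Perm (Fin n)) (i : ℕ) : Option ℕ :=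
  if h : i < n then some (π ⟨i, h⟩ : ℕ) else none

lemma T_pf {n : ℕ} (π : Equiv.Perm (Fin n)) : T (pf π) n = rsP π := by
  have key : ∀ i ≤ n, T (pf π) i = ((permWord π).take i).foldl insertTab [] := by
    intro i
    induction i with
    | zero => intro _; simp [T]
    | succ i ih =>
      intro hi
      have hl : i < (permWord π).length := by simp [permWord]; omega
      rw [T_some (v := (π ⟨i, hi⟩ : ℕ)) (by simp [pf, Nat.lt_of_succ_le hi]), ih (by omega),
        List.take_succ_eq_append_getElem hl, List.foldl_append]
      simp [permWord]
  rw [key n le_rfl, rsP, List.take_of_length_le (by simp [permWord])]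

end RSInv

/-- For an involution `π ∈ S_n` (i.e. `π² = 1`) with exactly `k` fixed points, the
Robinson–Schensted insertion tableau `P(π)` has exactly `k` columns of odd length;
in particular `π` has no fixed points if and only if all columns of the
Robinson–Schensted shape have even length. -/
theorem involution_fixed_points_eq_odd_columns (n : ℕ) (π : Equiv.Perm (Fin n))
    (hinv : π ^ 2 = 1) :
    (((Finset.range ((rsP π).headD []).length).filter
        fun j => Odd (colLen (rsP π) j)).card
      = Fintype.card {i : Fin n // π i = i}) ∧
    ((∀ i, π i ≠ i) ↔ ∀ j < ((rsP π).headD []).length, Even (colLen (rsP π) j)) := by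
  have hpp : ∀ i, π (π i) = i := by
    intro i
    have := congrArg (fun σ : Equiv.Perm (Fin n) => σ i) hinv
    simpa [pow_two] using this
  have hs : RSInv.Symm (RSInv.pf π) := by
    intro i j h
    unfold RSInv.pf at h ⊢
    split_ifs at h with hi
    have h' : (π ⟨i, hi⟩ : ℕ) = j := by simpa using h
    subst h'
    simp [hpp]
  have hn : ∀ i, n ≤ i → RSInv.pf π i = none := by
    intro i hi
    simp [RSInv.pf, hi]
  have hm := (RSInv.main n _ (RSInv.pf π) hs hn rfl).2
  have hhead : ((rsP π).headD []).length = (RSInv.R (RSInv.pf π) n).length := by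
    rw [← RSInv.T_pf]
    rcases RSInv.T_eq (RSInv.pf π) n with h | ⟨h1, h2, -, -⟩
    · rw [h]; rfl
    · rw [h1, h2]; rfl
  have hfix : RSInv.fixc (RSInv.pf π) n = Fintype.card {i : Fin n // π i = i} := by
    rw [Fintype.card_subtype, RSInv.fixc]
    symm
    apply Finset.card_bij (fun (a : Fin n) _ => (a : ℕ))
    · intro a ha
      simp at ha
      simp [RSInv.pf, ha]
    · intro a _ b _ h
      exact Fin.ext h
    · intro b hb
      simp only [Finset.mem_filter, Finset.mem_range] at hb
      refine ⟨⟨b, hb.1⟩, ?_, rfl⟩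
      have := hb.2
      simp [RSInv.pf, hb.1] at this
      simp [Fin.ext_iff, this]
  rw [RSInv.T_pf, ← hhead, hfix] at hm
  refine ⟨hm, ?_⟩
  have h1 : (∀ i, π i ≠ i) ↔ Fintype.card {i : Fin n // π i = i} = 0 := by
    rw [Fintype.card_eq_zero_iff, isEmpty_subtype]
  rw [h1, ← hm, Finset.card_eq_zero, Finset.filter_eq_empty_iff]
  simp
end

section
/- Gessel's identity (finite form): the number of pairs (P,Q) of standard Young tableaux of the same shape λ ⊢ k with λ_1 ≤ n is given by the U(n) moment formula #{π ∈ S_k : L(π) ≤ n} = C(2k,k)^{-1} ∫_{U(n)} (Tr(M + M̄))^{2k} dM, where dM is normalized Haar measure on the unitary group U(n). -/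
open MeasureTheory

/-- The length of the longest increasing subsequence of `π ∈ S_k`. -/
noncomputable def lis {k : ℕ} (π : Equiv.Perm (Fin k)) : ℕ :=
  sSup {m | ∃ s : Fin m → Fin k, StrictMono s ∧ StrictMono (fun i => π (s i))}

namespace Gessel

theorem lis_le_iff {k : ℕ} (π : Equiv.Perm (Fin k)) (n : ℕ) :
    lis π ≤ n ↔
      ¬ ∃ s : Fin (n + 1) → Fin k, StrictMono s ∧ StrictMono (fun i => π (s i)) := by
  have hb : BddAbove {m | ∃ s : Fin m → Fin k, StrictMono s ∧ StrictMono (fun i => π (s i))} := by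
    refine ⟨k, ?_⟩
    rintro m ⟨s, hs, -⟩
    simpa using Fintype.card_le_of_injective s hs.injective
  constructor
  · rintro h ⟨s, hs⟩
    have := le_csSup hb (show n + 1 ∈ _ from ⟨s, hs⟩)
    unfold lis at h
    omega
  · intro h
    unfold lis
    refine csSup_le ⟨0, Fin.elim0, fun i => i.elim0, fun i => i.elim0⟩ ?_
    rintro m ⟨s, hs, hs'⟩
    by_contra hm
    have hm : n + 1 ≤ m := by omega
    exact h ⟨fun i => s (Fin.castLE hm i), hs.comp (Fin.strictMono_castLE hm),
      hs'.comp (Fin.strictMono_castLE hm)⟩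

/-- Greedy colouring: a permutation without increasing subsequences of length `n+1`
is a union of `n` decreasing subsequences. -/
theorem exists_coloring {k n : ℕ} (π : Equiv.Perm (Fin k)) (h : lis π ≤ n) :
    ∃ c : Fin k → Fin n, ∀ i j, i < j → c i = c j → π j < π i := by
  rw [lis_le_iff] at h
  let α := {p : Fin k × Fin k // p.2 = π p.1}
  let e : Fin k → α := fun i => ⟨(i, π i), rfl⟩
  have hlt : ∀ x : α, Order.height x < (n : ℕ∞) := by
    intro x
    by_contra hx
    push Not at hx
    obtain ⟨p, -, hp⟩ := Order.exists_series_of_le_height x hx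
    apply h
    have hsm : StrictMono p.toFun := p.strictMono
    have key : ∀ a b : Fin (p.length + 1), a < b → (p.toFun a).1.1 < (p.toFun b).1.1 ∧
        π (p.toFun a).1.1 < π (p.toFun b).1.1 := by
      intro a b hab
      have h1 : (p.toFun a).1 < (p.toFun b).1 := hsm hab
      have h2 := (p.toFun a).2
      have h3 := (p.toFun b).2
      have hne : (p.toFun a).1.1 ≠ (p.toFun b).1.1 := by
        intro he
        apply h1.ne
        refine Prod.ext he ?_
        rw [h2, h3, he]
      refine ⟨lt_of_le_of_ne h1.le.1 hne, lt_of_le_of_ne ?_ (fun h => hne (π.injective h))⟩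
      rw [← h2, ← h3]
      exact h1.le.2
    have hl : n + 1 = p.length + 1 := by omega
    refine ⟨fun i => (p.toFun (Fin.cast hl i)).1.1, fun a b hab => ?_, fun a b hab => ?_⟩
    · exact (key _ _ (by simpa using hab)).1
    · exact (key _ _ (by simpa using hab)).2
  have hnat : ∀ x : α, (Order.height x).toNat < n := by
    intro x
    have := hlt x
    have hx : Order.height x ≠ ⊤ := ne_top_of_lt this
    rw [← ENat.natCast_toNat hx] at this
    exact_mod_cast this
  refine ⟨fun i => ⟨(Order.height (e i)).toNat, hnat _⟩, fun i j hij hc => ?_⟩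
  by_contra hπ
  push Not at hπ
  have h1 : e i < e j := by
    rw [← Subtype.coe_lt_coe]
    exact Prod.mk_lt_mk.2 (Or.inl ⟨hij, hπ⟩)
  have h2 := Order.height_strictMono h1 (ne_top_of_lt (hlt (e i))).lt_top
  simp only [Fin.mk.injEq] at hc
  have := congrArg (fun m : ℕ => (m : ℕ∞)) hc
  simp only [ENat.natCast_toNat (ne_top_of_lt (hlt (e i))),
    ENat.natCast_toNat (ne_top_of_lt (hlt (e j)))] at this
  exact h2.ne this

/-- The permutation matrices on the tensor power. -/
def rho (n : ℕ) {k : ℕ} (σ : Equiv.Perm (Fin k)) :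
    Matrix (Fin k → Fin n) (Fin k → Fin n) ℂ :=
  fun i j => if i ∘ σ = j then 1 else 0

theorem rho_mul_apply {n k : ℕ} (σ : Equiv.Perm (Fin k))
    (X : Matrix (Fin k → Fin n) (Fin k → Fin n) ℂ) (i j) :
    (rho n σ * X) i j = X (i ∘ σ) j := by
  simp [Matrix.mul_apply, rho]

theorem mul_rho_apply {n k : ℕ} (σ : Equiv.Perm (Fin k))
    (X : Matrix (Fin k → Fin n) (Fin k → Fin n) ℂ) (i j) :
    (X * rho n σ) i j = X i (j ∘ σ.symm) := by
  have : ∀ l : Fin k → Fin n, (l ∘ σ = j) ↔ j ∘ σ.symm = l := by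
    intro l
    constructor
    · rintro rfl; ext; simp
    · rintro rfl; ext; simp
  simp [Matrix.mul_apply, rho, this]

theorem rho_mul {n k : ℕ} (σ τ : Equiv.Perm (Fin k)) :
    rho n σ * rho n τ = rho n (σ * τ) := by
  ext i j
  rw [rho_mul_apply]
  rfl

theorem rho_one {n k : ℕ} : rho n (1 : Equiv.Perm (Fin k)) = 1 := by
  ext i j
  simp [rho, Matrix.one_apply]

/-- lexicographic code -/
def lx {k : ℕ} (π : Equiv.Perm (Fin k)) : Lex (Fin k → Fin k) := toLex π

theorem lx_inj {k : ℕ} : Function.Injective (lx (k := k)) := by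
  intro a b h
  exact Equiv.coe_fn_injective (toLex.injective h)

theorem triangular {n k : ℕ} (π : Equiv.Perm (Fin k)) (h : lis π ≤ n) :
    ∃ i j : Fin k → Fin n, rho n π i j = 1 ∧ ∀ σ, rho n σ i j ≠ 0 → lx σ ≤ lx π := by
  obtain ⟨c, hc⟩ := exists_coloring π h
  refine ⟨c ∘ π.symm, c, ?_, ?_⟩
  · have : (c ∘ π.symm) ∘ π = c := by ext; simp
    simp [rho, this]
  · intro σ hσ
    have hσ : (c ∘ π.symm) ∘ σ = c := by
      by_contra hne
      exact hσ (by simp [rho, hne])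
    by_contra hlt
    push Not at hlt
    obtain ⟨p, hp, hp'⟩ := hlt
    change ∀ j < p, π j = σ j at hp
    change π p < σ p at hp'
    have h1 := congrFun hσ p
    simp only [Function.comp_apply] at h1
    set q := π.symm (σ p) with hq
    have hq' : π q = σ p := by simp [hq]
    rcases lt_trichotomy q p with h2 | h2 | h2
    · have := hp q h2
      rw [hq'] at this
      exact h2.ne' (σ.injective this)
    · rw [h2] at hq'
      exact hp'.ne hq'
    · have := hc p q h2 h1.symm
      rw [hq'] at this
      exact lt_asymm this hp'

theorem linInd (n k : ℕ) : LinearIndependent ℂ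
    (fun π : {π : Equiv.Perm (Fin k) // lis π ≤ n} => rho n π.1) := by
  rw [Fintype.linearIndependent_iff]
  intro g hg
  by_contra hne
  push Not at hne
  let S := Finset.univ.filter (fun π : {π : Equiv.Perm (Fin k) // lis π ≤ n} => g π ≠ 0)
  have hS : S.Nonempty := by
    obtain ⟨i, hi⟩ := hne
    exact ⟨i, by simp [S, hi]⟩
  obtain ⟨π, hπS, hmin⟩ := S.exists_min_image (fun π => lx π.1) hS
  obtain ⟨i, j, h1, h2⟩ := triangular π.1 π.2
  have h3 := congrFun (congrFun hg i) j
  simp only [Matrix.sum_apply, Matrix.smul_apply, Matrix.zero_apply] at h3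
  rw [Finset.sum_eq_single π] at h3
  · rw [h1] at h3
    simp only [S, Finset.mem_filter] at hπS
    apply hπS.2
    simpa using h3
  · intro σ _ hσ
    by_contra hz
    have hz1 : g σ ≠ 0 := by rintro h; simp [h] at hz
    have hz2 : rho n σ.1 i j ≠ 0 := by rintro h; simp [h] at hz
    have hle := hmin σ (by simp [S, hz1])
    exact hσ (Subtype.ext (lx_inj (le_antisymm (h2 _ hz2) hle)))
  · simp

theorem antisymm_zero {n k : ℕ} (π : Equiv.Perm (Fin k)) (s : Fin (n + 1) ↪ Fin k) :
    ∑ τ : Equiv.Perm (Fin (n + 1)),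
      ((Equiv.Perm.sign τ : ℤ) : ℂ) • rho n (π * τ.viaFintypeEmbedding s) = 0 := by
  ext i j
  simp only [Matrix.sum_apply, Matrix.smul_apply, Matrix.zero_apply]
  obtain ⟨a, b, hab, he⟩ := Fintype.exists_ne_map_eq_of_card_lt
    (fun t : Fin (n + 1) => i (π (s t))) (by simp)
  have key : ∀ τ : Equiv.Perm (Fin (n + 1)),
      rho n (π * (Equiv.swap a b * τ).viaFintypeEmbedding s) i j =
      rho n (π * τ.viaFintypeEmbedding s) i j := by
    intro τ
    have : i ∘ (π * (Equiv.swap a b * τ).viaFintypeEmbedding s) =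
        i ∘ (π * τ.viaFintypeEmbedding s) := by
      ext x
      simp only [Function.comp_apply, Equiv.Perm.coe_mul]
      by_cases hx : x ∈ Set.range s
      · obtain ⟨t, rfl⟩ := hx
        simp only [Equiv.Perm.viaFintypeEmbedding_apply_image, Equiv.Perm.coe_mul,
          Function.comp_apply]
        by_cases h1 : τ t = a
        · rw [h1, Equiv.swap_apply_left]; rw [he]
        · by_cases h2 : τ t = b
          · rw [h2, Equiv.swap_apply_right]; rw [he]
          · rw [Equiv.swap_apply_of_ne_of_ne h1 h2]
      · rw [Equiv.Perm.viaFintypeEmbedding_apply_notMem_range _ _ hx,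
          Equiv.Perm.viaFintypeEmbedding_apply_notMem_range _ _ hx]
    unfold rho
    rw [this]
  set F : Equiv.Perm (Fin (n + 1)) → ℂ := fun τ => ((Equiv.Perm.sign τ : ℤ) : ℂ) •
    rho n (π * τ.viaFintypeEmbedding s) i j with hF
  have h1 := Equiv.sum_comp (Equiv.mulLeft (Equiv.swap a b)) F
  have h2 : ∀ τ, F (Equiv.mulLeft (Equiv.swap a b) τ) = - F τ := by
    intro τ
    simp only [hF, Equiv.coe_mulLeft, key, Equiv.Perm.sign_mul, Equiv.Perm.sign_swap hab]
    simp
  simp only [h2, Finset.sum_neg_distrib] at h1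
  change ∑ τ, F τ = 0
  exact self_eq_neg.mp h1.symm

theorem lx_lt {n k : ℕ} (π : Equiv.Perm (Fin k)) (s : Fin (n + 1) ↪ Fin k)
    (hs : StrictMono s) (hs' : StrictMono (fun i => π (s i)))
    (τ : Equiv.Perm (Fin (n + 1))) (hτ : τ ≠ 1) :
    lx π < lx (π * τ.viaFintypeEmbedding s) := by
  have hex : ∃ t, τ t ≠ t := by
    by_contra h
    push Not at h
    exact hτ (Equiv.ext h)
  let S := Finset.univ.filter (fun t => τ t ≠ t)
  have hS : S.Nonempty := by
    obtain ⟨i, hi⟩ := hex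
    exact ⟨i, by simp [S, hi]⟩
  obtain ⟨t, htS, hmin⟩ := S.exists_min_image id hS
  have hlow : ∀ u < t, τ u = u := by
    intro u hu
    by_contra h
    exact absurd (hmin u (by simp [S, h])) (not_le.2 hu)
  have htS : τ t ≠ t := by simpa [S] using htS
  have hgt : t < τ t := by
    rcases lt_or_gt_of_ne htS with h | h
    · exact absurd (τ.injective (hlow _ h)) htS
    · exact h
  refine ⟨s t, ?_, ?_⟩
  · intro x hx
    change π x = π (τ.viaFintypeEmbedding s x)
    by_cases hr : x ∈ Set.range s
    · obtain ⟨u, rfl⟩ := hr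
      rw [Equiv.Perm.viaFintypeEmbedding_apply_image, hlow u (hs.lt_iff_lt.1 hx)]
    · rw [Equiv.Perm.viaFintypeEmbedding_apply_notMem_range _ _ hr]
  · change π (s t) < π (τ.viaFintypeEmbedding s (s t))
    rw [Equiv.Perm.viaFintypeEmbedding_apply_image]
    exact hs' hgt

theorem rho_mem_span {n k : ℕ} (π : Equiv.Perm (Fin k)) :
    rho n π ∈ Submodule.span ℂ (Set.range
      (fun π : {π : Equiv.Perm (Fin k) // lis π ≤ n} => rho n π.1)) := by
  have hwf : WellFounded (fun a b : Equiv.Perm (Fin k) => lx b < lx a) :=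
    InvImage.wf lx (wellFounded_gt (α := Lex (Fin k → Fin k)))
  induction π using hwf.induction with
  | _ π ih =>
    by_cases h : lis π ≤ n
    · exact Submodule.subset_span ⟨⟨π, h⟩, rfl⟩
    · rw [lis_le_iff, not_not] at h
      obtain ⟨s, hs, hs'⟩ := h
      have h0 := antisymm_zero (n := n) π ⟨s, hs.injective⟩
      rw [← Finset.add_sum_erase _ _ (Finset.mem_univ 1)] at h0
      have h1 : π * (1 : Equiv.Perm (Fin (n+1))).viaFintypeEmbedding ⟨s, hs.injective⟩ = π := by
        simp [Equiv.Perm.viaFintypeEmbedding]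
      rw [h1] at h0
      simp only [Equiv.Perm.sign_one, Units.val_one, Int.cast_one, one_smul] at h0
      rw [eq_neg_of_add_eq_zero_left h0]
      refine Submodule.neg_mem _ (Submodule.sum_mem _ fun τ hτ => Submodule.smul_mem _ _ ?_)
      exact ih _ (lx_lt π ⟨s, hs.injective⟩ hs hs' τ (Finset.ne_of_mem_erase hτ))

/-- The span of the permutation operators. -/
def spanRho (n k : ℕ) : Submodule ℂ (Matrix (Fin k → Fin n) (Fin k → Fin n) ℂ) :=
  Submodule.span ℂ (Set.range (fun π : Equiv.Perm (Fin k) => rho n π))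

theorem finrank_spanRho (n k : ℕ) :
    Module.finrank ℂ (spanRho n k) = Nat.card {π : Equiv.Perm (Fin k) // lis π ≤ n} := by
  have : spanRho n k = Submodule.span ℂ (Set.range
      (fun π : {π : Equiv.Perm (Fin k) // lis π ≤ n} => rho n π.1)) := by
    apply le_antisymm
    · refine Submodule.span_le.2 ?_
      rintro _ ⟨π, rfl⟩
      exact rho_mem_span π
    · refine Submodule.span_mono ?_
      rintro _ ⟨π, rfl⟩
      exact ⟨π.1, rfl⟩
  rw [this, finrank_span_eq_card (linInd n k), Nat.card_eq_fintype_card]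

/-- The tensor power of a matrix. -/
def tp {n : ℕ} (k : ℕ) (A : Matrix (Fin n) (Fin n) ℂ) :
    Matrix (Fin k → Fin n) (Fin k → Fin n) ℂ :=
  fun i j => ∏ s, A (i s) (j s)

theorem tp_mul {n k : ℕ} (A B : Matrix (Fin n) (Fin n) ℂ) :
    tp k (A * B) = tp k A * tp k B := by
  ext i j
  simp only [tp, Matrix.mul_apply, ← Finset.prod_mul_distrib]
  rw [Finset.prod_univ_sum]
  simp

theorem tp_one {n k : ℕ} : tp k (1 : Matrix (Fin n) (Fin n) ℂ) = 1 := by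
  ext i j
  simp only [tp, Matrix.one_apply]
  rw [Finset.prod_ite_zero]
  simp [funext_iff]

theorem tp_conjTranspose {n k : ℕ} (A : Matrix (Fin n) (Fin n) ℂ) :
    tp k A.conjTranspose = (tp k A).conjTranspose := by
  ext i j
  simp [tp, Matrix.conjTranspose_apply]

theorem trace_tp {n k : ℕ} (A : Matrix (Fin n) (Fin n) ℂ) :
    (tp k A).trace = A.trace ^ k := by
  simp only [Matrix.trace, tp, Matrix.diag]
  have := Finset.prod_univ_sum (fun _ : Fin k => (Finset.univ : Finset (Fin n)))
    (fun _ x => A x x)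
  simpa using this.symm

theorem tp_comm_rho {n k : ℕ} (A : Matrix (Fin n) (Fin n) ℂ) (σ : Equiv.Perm (Fin k)) :
    tp k A * rho n σ = rho n σ * tp k A := by
  ext i j
  rw [rho_mul_apply, mul_rho_apply]
  simp only [tp, Function.comp_apply]
  rw [← Equiv.prod_comp σ]
  simp

/-- one-parameter polynomial density -/
theorem comm_line {n k : ℕ} (T : Matrix (Fin k → Fin n) (Fin k → Fin n) ℂ)
    (B C : Matrix (Fin n) (Fin n) ℂ)
    (h : Set.Infinite {c : ℂ | tp k (B + c • C) * T = T * tp k (B + c • C)}) (c : ℂ) :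
    tp k (B + c • C) * T = T * tp k (B + c • C) := by
  ext i j
  let P : (Fin k → Fin n) → (Fin k → Fin n) → Polynomial ℂ := fun i j =>
    ∏ s, (Polynomial.C (B (i s) (j s)) + Polynomial.X * Polynomial.C (C (i s) (j s)))
  have hP : ∀ c i j, (P i j).eval c = tp k (B + c • C) i j := by
    intro c i j
    simp only [P, tp, Polynomial.eval_prod, Polynomial.eval_add, Polynomial.eval_mul,
      Polynomial.eval_C, Polynomial.eval_X, Matrix.add_apply, Matrix.smul_apply, smul_eq_mul]
  have hpoly : (∑ l, P i l * Polynomial.C (T l j)) = ∑ l, Polynomial.C (T i l) * P l j := by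
    apply Polynomial.eq_of_infinite_eval_eq
    refine h.mono ?_
    intro c hc
    have := congrFun (congrFun hc i) j
    simpa [Polynomial.eval_finsetSum, hP, Matrix.mul_apply] using this
  have := congrArg (Polynomial.eval c) hpoly
  simpa [Polynomial.eval_finsetSum, hP, Matrix.mul_apply] using this

theorem comm_diag {n k : ℕ} (T : Matrix (Fin k → Fin n) (Fin k → Fin n) ℂ)
    (h : ∀ M ∈ Matrix.unitaryGroup (Fin n) ℂ, tp k M * T = T * tp k M)
    (d : Fin n → ℂ) :
    tp k (Matrix.diagonal d) * T = T * tp k (Matrix.diagonal d) := by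
  have hmul : ∀ A B : Matrix (Fin n) (Fin n) ℂ, tp k A * T = T * tp k A →
      tp k B * T = T * tp k B → tp k (A * B) * T = T * tp k (A * B) := by
    intro A B hA hB
    rw [tp_mul, mul_assoc, hB, ← mul_assoc, hA, mul_assoc]
  have hone : ∀ (a : Fin n) (c : ℂ), 
      tp k (Matrix.diagonal (Function.update 1 a c)) * T =
      T * tp k (Matrix.diagonal (Function.update 1 a c)) := by
    intro a c
    have hrep : ∀ c : ℂ, (Matrix.diagonal (Function.update 1 a c) : Matrix (Fin n) (Fin n) ℂ) =
        Matrix.diagonal (Function.update 1 a 0) +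
          c • Matrix.diagonal (Function.update 0 a 1) := by
      intro c
      rw [← Matrix.diagonal_smul, Matrix.diagonal_add]
      congr 1
      ext x
      by_cases hx : x = a
      · subst hx; simp
      · simp [Function.update_of_ne hx]
    rw [hrep]
    apply comm_line
    refine Set.Infinite.mono (s := {c : ℂ | ‖c‖ = 1}) ?_ ?_
    · intro c hc
      simp only [Set.mem_ofPred_eq] at hc ⊢
      rw [← hrep]
      apply h
      rw [Matrix.mem_unitaryGroup_iff, Matrix.star_eq_conjTranspose,
        Matrix.diagonal_conjTranspose, Matrix.diagonal_mul_diagonal, ← Matrix.diagonal_one]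
      congr 1
      ext x
      by_cases hx : x = a
      · subst hx
        simp [Complex.mul_conj, Complex.normSq_eq_norm_sq, hc]
      · simp [Function.update_of_ne hx]
    · have : Set.InjOn (fun t : ℝ => Complex.exp (t * Complex.I)) (Set.Ioo 0 1) := by
        intro x hx y hy hxy
        have h1 := congrArg Complex.re hxy
        simp only [Complex.exp_ofReal_mul_I_re] at h1
        have hpi := Real.pi_gt_three
        exact Real.injOn_cos ⟨hx.1.le, by linarith [hx.2]⟩ ⟨hy.1.le, by linarith [hy.2]⟩ h1
      refine ((Set.Ioo_infinite (zero_lt_one (α := ℝ))).image this).mono ?_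
      rintro _ ⟨t, -, rfl⟩
      exact Complex.norm_exp_ofReal_mul_I t
  have hfin : ∀ S : Finset (Fin n),
      tp k (Matrix.diagonal (fun x => if x ∈ S then d x else 1)) * T =
      T * tp k (Matrix.diagonal (fun x => if x ∈ S then d x else 1)) := by
    intro S
    induction S using Finset.induction_on with
    | empty => simp [tp_one]
    | insert a S ha ih =>
      have : (Matrix.diagonal (fun x => if x ∈ insert a S then d x else 1)) =
          Matrix.diagonal (Function.update 1 a (d a)) *
          Matrix.diagonal (fun x => if x ∈ S then d x else 1) := by
        rw [Matrix.diagonal_mul_diagonal]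
        congr 1
        ext x
        by_cases hx : x = a
        · subst hx; simp [ha]
        · simp [hx]
      rw [this]
      exact hmul _ _ (hone _ _) ih
  simpa using hfin Finset.univ

section
open scoped ComplexOrder

theorem comm_unit {n k : ℕ} (T : Matrix (Fin k → Fin n) (Fin k → Fin n) ℂ)
    (h : ∀ M ∈ Matrix.unitaryGroup (Fin n) ℂ, tp k M * T = T * tp k M)
    (A : Matrix (Fin n) (Fin n) ℂ) (hA : IsUnit A) :
    tp k A * T = T * tp k A := by
  have hmul : ∀ A B : Matrix (Fin n) (Fin n) ℂ, tp k A * T = T * tp k A →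
      tp k B * T = T * tp k B → tp k (A * B) * T = T * tp k (A * B) := by
    intro A B hA hB
    rw [tp_mul, mul_assoc, hB, ← mul_assoc, hA, mul_assoc]
  have hpd : (A.conjTranspose * A).PosDef := 
    Matrix.PosDef.conjTranspose_mul_self A (Matrix.mulVec_injective_of_isUnit hA)
  have hH := hpd.isHermitian
  set W := hH.eigenvectorUnitary with hW
  set l := hH.eigenvalues with hl
  have hlpos : ∀ i, 0 < l i := fun i => hpd.eigenvalues_pos i
  have hsp := hH.conjStarAlgAut_star_eigenvectorUnitary
  rw [Unitary.conjStarAlgAut_star_apply] at hsp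
  set D : Matrix (Fin n) (Fin n) ℂ := Matrix.diagonal (fun i => ((Real.sqrt (l i) : ℝ) : ℂ)) with hD
  set D' : Matrix (Fin n) (Fin n) ℂ :=
    Matrix.diagonal (fun i => (((Real.sqrt (l i))⁻¹ : ℝ) : ℂ)) with hD'
  have hsq : ∀ i, Real.sqrt (l i) ≠ 0 := fun i => (Real.sqrt_pos.2 (hlpos i)).ne'
  have hDD : D' * D = 1 := by
    rw [hD, hD', Matrix.diagonal_mul_diagonal, ← Matrix.diagonal_one]
    congr 1
    ext i
    rw [← Complex.ofReal_mul, inv_mul_cancel₀ (hsq i), Complex.ofReal_one]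
  have hD's : star D' = D' := by
    rw [hD', Matrix.star_eq_conjTranspose, Matrix.diagonal_conjTranspose]
    congr 1
    ext i
    simp
  have hUn : A * W * D' ∈ Matrix.unitaryGroup (Fin n) ℂ := by
    rw [Matrix.mem_unitaryGroup_iff']
    rw [star_mul, star_mul, hD's]
    have : D' * (star (W : Matrix (Fin n) (Fin n) ℂ) * star A) * (A * W * D') =
        D' * (star (W : Matrix (Fin n) (Fin n) ℂ) * (A.conjTranspose * A) * W) * D' := by
      rw [Matrix.star_eq_conjTranspose A]; noncomm_ring
    rw [this]
    rw [hsp, hD', Matrix.diagonal_mul_diagonal, Matrix.diagonal_mul_diagonal,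
      ← Matrix.diagonal_one]
    congr 1
    ext i
    simp only [Function.comp_apply]
    change (((Real.sqrt (l i))⁻¹ : ℝ) : ℂ) * ((l i : ℝ) : ℂ) * (((Real.sqrt (l i))⁻¹ : ℝ) : ℂ) = 1
    rw [← Complex.ofReal_mul, ← Complex.ofReal_mul, ← Complex.ofReal_one]
    congr 1
    have := Real.mul_self_sqrt (hlpos i).le
    have h0 := hsq i
    field_simp
    nlinarith
  have hdec : A = (A * W * D') * D * star (W : Matrix (Fin n) (Fin n) ℂ) := by
    rw [mul_assoc (A * _) D' D, hDD, mul_one, mul_assoc,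
      (Matrix.mem_unitaryGroup_iff.1 W.2), mul_one]
  rw [hdec]
  refine hmul _ _ (hmul _ _ (h _ hUn) (comm_diag T h _)) (h _ ?_)
  exact (star W).2

end

theorem comm_all {n k : ℕ} (T : Matrix (Fin k → Fin n) (Fin k → Fin n) ℂ)
    (h : ∀ M ∈ Matrix.unitaryGroup (Fin n) ℂ, tp k M * T = T * tp k M)
    (A : Matrix (Fin n) (Fin n) ℂ) :
    tp k A * T = T * tp k A := by
  have := comm_line T A 1 ?_ 0
  · simpa using this
  · have hfin : {c : ℂ | ¬ IsUnit (A + c • (1 : Matrix (Fin n) (Fin n) ℂ))}.Finite := by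
      have h1 := (-A).finite_spectrum
      refine h1.subset ?_
      intro c hc
      rw [spectrum.mem_iff]
      simp only [Set.mem_ofPred_eq] at hc
      rwa [Algebra.algebraMap_eq_smul_one, sub_neg_eq_add, add_comm]
    refine (hfin.infinite_compl).mono ?_
    intro c hc
    simp only [Set.mem_compl_iff, Set.mem_ofPred_eq, not_not] at hc
    exact comm_unit T h _ hc

theorem exists_perm_of_sum_single {E : Type*} {k : ℕ} (a b : Fin k → E)
    (h : (∑ s, Finsupp.single (a s) 1 : E →₀ ℕ) = ∑ s, Finsupp.single (b s) 1) :
    ∃ σ : Equiv.Perm (Fin k), a ∘ σ = b := by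
  classical
  have hc : ∀ e : E, Fintype.card {s // b s = e} = Fintype.card {s // a s = e} := by
    intro e
    have := DFunLike.congr_fun h e
    simp only [Finsupp.finsetSum_apply, Finsupp.single_apply, Finset.sum_boole,
      Nat.cast_id] at this
    rw [Fintype.card_subtype, Fintype.card_subtype, this]
  let e := fun x => Fintype.equivOfCardEq (hc x)
  let σ : Fin k ≃ Fin k := (Equiv.sigmaFiberEquiv b).symm.trans
    ((Equiv.sigmaCongrRight e).trans (Equiv.sigmaFiberEquiv a))
  refine ⟨σ, ?_⟩
  ext s
  exact (e (b s) ⟨s, rfl⟩).2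

/-- symmetric tensors are spanned by powers (dual form) -/
theorem symm_dual {E : Type*} [Fintype E] {k : ℕ} (φ X : (Fin k → E) → ℂ)
    (hX : ∀ a (σ : Equiv.Perm (Fin k)), X (a ∘ σ) = X a)
    (hφ : ∀ A : E → ℂ, ∑ a, φ a * ∏ s, A (a s) = 0) : ∑ a, φ a * X a = 0 := by
  classical
  let m : (Fin k → E) → (E →₀ ℕ) := fun a => ∑ s, Finsupp.single (a s) 1
  let p : MvPolynomial E ℂ := ∑ a, MvPolynomial.monomial (m a) (φ a)
  have hmon : ∀ a, MvPolynomial.monomial (m a) (φ a) =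
      MvPolynomial.C (φ a) * ∏ s, MvPolynomial.X (a s) := by
    intro a
    simp only [MvPolynomial.X, m]
    rw [← MvPolynomial.monomial_sum_one, MvPolynomial.C_mul_monomial, mul_one]
  have hp : p = 0 := by
    apply MvPolynomial.funext
    intro A
    simp only [p, hmon, map_sum, map_mul, map_prod, MvPolynomial.eval_C, MvPolynomial.eval_X,
      map_zero]
    exact hφ A
  have hcoef : ∀ d, ∑ a with m a = d, φ a = 0 := by
    intro d
    have := congrArg (MvPolynomial.coeff d) hp
    simp only [p, MvPolynomial.coeff_sum, MvPolynomial.coeff_monomial,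
      MvPolynomial.coeff_zero] at this
    rwa [← Finset.sum_filter] at this
  rw [← Finset.sum_fiberwise_of_maps_to (s := Finset.univ) (t := Finset.univ.image m) (g := m)
    (fun a _ => Finset.mem_image_of_mem _ (Finset.mem_univ a))]
  apply Finset.sum_eq_zero
  intro d hd
  obtain ⟨b, -, rfl⟩ := Finset.mem_image.1 hd
  rw [← zero_mul (X b), ← hcoef (m b), Finset.sum_mul]
  refine Finset.sum_congr rfl ?_
  intro a ha
  obtain ⟨σ, hσ⟩ := exists_perm_of_sum_single b a (by
    simpa [m] using (Finset.mem_filter.1 ha).2.symm)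
  rw [← hσ, hX]

theorem comm_symm {n k : ℕ} (T : Matrix (Fin k → Fin n) (Fin k → Fin n) ℂ)
    (h : ∀ A, tp k A * T = T * tp k A)
    (X : Matrix (Fin k → Fin n) (Fin k → Fin n) ℂ)
    (hX : ∀ σ, X * rho n σ = rho n σ * X) : X * T = T * X := by
  have hX' : ∀ i j (σ : Equiv.Perm (Fin k)), X (i ∘ σ) (j ∘ σ) = X i j := by
    intro i j σ
    have := congrFun (congrFun (hX σ) i) (j ∘ σ)
    rw [rho_mul_apply, mul_rho_apply] at this
    rw [← this]
    congr 1
    ext; simp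
  ext p q
  let L : ((Fin k → Fin n) × (Fin k → Fin n)) → ℂ := fun x =>
    (if x.1 = p then T x.2 q else 0) - (if x.2 = q then T p x.1 else 0)
  have hL : ∀ Y : Matrix (Fin k → Fin n) (Fin k → Fin n) ℂ,
      ∑ x, L x * Y x.1 x.2 = (Y * T) p q - (T * Y) p q := by
    intro Y
    simp only [L, sub_mul, Finset.sum_sub_distrib, Fintype.sum_prod_type, ite_mul, zero_mul,
      Matrix.mul_apply]
    congr 1
    · rw [Finset.sum_comm]
      simp [mul_comm]
    · simp
  let e : (Fin k → Fin n × Fin n) ≃ (Fin k → Fin n) × (Fin k → Fin n) :=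
    Equiv.arrowProdEquivProdArrow _ _ _
  have := symm_dual (fun a => L (e a)) (fun a => X (e a).1 (e a).2)
    (fun a σ => hX' (fun s => (a s).1) (fun s => (a s).2) σ) (fun A => by
      let B : Matrix (Fin n) (Fin n) ℂ := fun i j => A (i, j)
      have h1 := hL (tp k B)
      rw [h B, sub_self, ← e.sum_comp] at h1
      exact h1)
  rw [e.sum_comp (fun x => L x * X x.1 x.2), hL] at this
  exact sub_eq_zero.1 this

theorem bicommutant {n k : ℕ} (T : Matrix (Fin k → Fin n) (Fin k → Fin n) ℂ)
    (h : ∀ X, (∀ σ, X * rho n σ = rho n σ * X) → X * T = T * X) :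
    T ∈ spanRho n k := by
  obtain ⟨Q0, hQ0⟩ := (spanRho n k).subtype.exists_leftInverse_of_injective
    (Submodule.ker_subtype _)
  have hQ0' : ∀ x (hx : x ∈ spanRho n k), (Q0 x : Matrix _ _ ℂ) = x := by
    intro x hx
    have := congrArg Subtype.val (DFunLike.congr_fun hQ0 ⟨x, hx⟩)
    simpa using this
  have hmulmem : ∀ σ x, x ∈ spanRho n k → rho n σ * x ∈ spanRho n k := by
    intro σ x hx
    induction hx using Submodule.span_induction with
    | mem x hx =>
      obtain ⟨τ, rfl⟩ := hx
      rw [rho_mul]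
      exact Submodule.subset_span ⟨_, rfl⟩
    | zero => simp
    | add x y _ _ hx hy => rw [mul_add]; exact Submodule.add_mem _ hx hy
    | smul c x _ hx => rw [Matrix.mul_smul]; exact Submodule.smul_mem _ _ hx
  let Q : Matrix (Fin k → Fin n) (Fin k → Fin n) ℂ →ₗ[ℂ]
      Matrix (Fin k → Fin n) (Fin k → Fin n) ℂ :=
    ((Fintype.card (Equiv.Perm (Fin k)) : ℂ)⁻¹) • ∑ σ : Equiv.Perm (Fin k),
      (LinearMap.mulLeft ℂ (rho n σ⁻¹)) ∘ₗ ((spanRho n k).subtype ∘ₗ Q0) ∘ₗ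
        (LinearMap.mulLeft ℂ (rho n σ))
  have hQ : ∀ X, Q X = ((Fintype.card (Equiv.Perm (Fin k)) : ℂ)⁻¹) •
      ∑ σ : Equiv.Perm (Fin k), rho n σ⁻¹ * (Q0 (rho n σ * X) : Matrix _ _ ℂ) := by
    intro X
    simp [Q]
  have hQmem : ∀ X, Q X ∈ spanRho n k := by
    intro X
    rw [hQ]
    exact Submodule.smul_mem _ _ (Submodule.sum_mem _ fun σ _ => hmulmem _ _ (Q0 _).2)
  have hQ1 : Q 1 = 1 := by
    rw [hQ]
    have : ∀ σ : Equiv.Perm (Fin k),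
        rho n σ⁻¹ * (Q0 (rho n σ * 1) : Matrix _ _ ℂ) = 1 := by
      intro σ
      rw [mul_one, hQ0' _ (Submodule.subset_span ⟨σ, rfl⟩), rho_mul, inv_mul_cancel, rho_one]
    simp only [this, Finset.sum_const, Finset.card_univ]
    rw [← Nat.cast_smul_eq_nsmul ℂ, smul_smul, inv_mul_cancel₀, one_smul]
    exact_mod_cast Fintype.card_ne_zero
  have hQc : ∀ τ X, Q (rho n τ * X) = rho n τ * Q X := by
    intro τ X
    rw [hQ, hQ, Matrix.mul_smul, Finset.mul_sum]
    congr 1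
    rw [← Equiv.sum_comp (Equiv.mulRight τ)
      (fun σ => rho n τ * (rho n σ⁻¹ * (Q0 (rho n σ * X)).1))]
    refine Finset.sum_congr rfl fun σ _ => ?_
    simp [← mul_assoc, rho_mul]
  let R : (Fin k → Fin n) → (Fin k → Fin n) → Matrix (Fin k → Fin n) (Fin k → Fin n) ℂ :=
    fun a b i j => Q (Matrix.single j b 1) i a
  have hR : ∀ X i a, Q X i a = ∑ b, (R a b * X) i b := by
    intro X i a
    conv_lhs => rw [Matrix.matrix_eq_sum_single X]
    simp only [map_sum, Matrix.sum_apply, R]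
    rw [Finset.sum_comm]
    refine Finset.sum_congr rfl fun b _ => Finset.sum_congr rfl fun j _ => ?_
    have : (Matrix.single j b (X j b)) = X j b • Matrix.single j b (1 : ℂ) := by simp
    rw [this, map_smul, Matrix.smul_apply, smul_eq_mul, mul_comm]
  have hRc : ∀ a b σ, R a b * rho n σ = rho n σ * R a b := by
    intro a b σ
    ext i j
    rw [rho_mul_apply, mul_rho_apply]
    simp only [R]
    have h1 : Matrix.single (j ∘ σ.symm) b (1 : ℂ) = rho n σ * Matrix.single j b 1 := by
      ext x y
      rw [rho_mul_apply]
      have : (j ∘ σ.symm = x) ↔ (j = x ∘ σ) := by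
        constructor
        · rintro rfl; ext; simp
        · rintro rfl; ext; simp
      simp [Matrix.single_apply, this]
    rw [h1, hQc, rho_mul_apply]
  have hQT : Q T = T := by
    ext i a
    rw [hR]
    have h1 : ∀ b, R a b * T = T * R a b := fun b => h _ (hRc a b)
    have h2 : ∑ b, (T * R a b) i b = (T * Q 1) i a := by
      have h3 : ∀ x, Q 1 x a = ∑ b, R a b x b := by
        intro x
        rw [hR]
        simp only [mul_one]
      rw [Matrix.mul_apply]
      simp only [h3, Matrix.mul_apply, Finset.mul_sum]
      rw [Finset.sum_comm]
    simp only [h1]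
    rw [h2, hQ1, mul_one]
  rw [← hQT]
  exact hQmem T

/-- Schur-Weyl duality. -/
theorem schur_weyl {n k : ℕ} (T : Matrix (Fin k → Fin n) (Fin k → Fin n) ℂ) :
    T ∈ spanRho n k ↔ ∀ M ∈ Matrix.unitaryGroup (Fin n) ℂ, tp k M * T = T * tp k M := by
  constructor
  · intro hT M _
    induction hT using Submodule.span_induction with
    | mem x hx =>
      obtain ⟨τ, rfl⟩ := hx
      exact tp_comm_rho M τ
    | zero => simp
    | add x y _ _ hx hy => rw [mul_add, add_mul, hx, hy]
    | smul c x _ hx => rw [Matrix.mul_smul, Matrix.smul_mul, hx]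
  · intro h
    exact bicommutant T fun X hX => comm_symm T (comm_all T h) X hX

theorem single_key {I : Type*} [Fintype I] [DecidableEq I] (B : Matrix I I ℂ) (i j : I) :
    (B * (Matrix.single i j 1 : Matrix I I ℂ) * B.conjTranspose : Matrix I I ℂ) i j = B i i * (starRingEnd ℂ) (B j j) := by
  rw [Matrix.mul_apply, Finset.sum_eq_single j]
  · rw [Matrix.mul_single_apply_same, mul_one, Matrix.conjTranspose_apply]
    rfl
  · intro b _ hb
    rw [Matrix.mul_single_apply_of_ne _ _ _ _ _ hb, zero_mul]
  · simp

section integral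

set_option linter.unusedSectionVars false

variable {n : ℕ} [MeasurableSpace (Matrix.unitaryGroup (Fin n) ℂ)]
    [BorelSpace (Matrix.unitaryGroup (Fin n) ℂ)]
    (μ : Measure (Matrix.unitaryGroup (Fin n) ℂ))
    [μ.IsHaarMeasure] [IsProbabilityMeasure μ]

theorem continuous_entry (i j : Fin n) : Continuous
    (fun M : Matrix.unitaryGroup (Fin n) ℂ => (M : Matrix (Fin n) (Fin n) ℂ) i j) :=
  continuous_subtype_val.matrix_elem i j

theorem continuous_tp (k : ℕ) (i j : Fin k → Fin n) : Continuous
    (fun M : Matrix.unitaryGroup (Fin n) ℂ => tp k (M : Matrix (Fin n) (Fin n) ℂ) i j) :=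
  continuous_finsetProd _ fun s _ => continuous_entry (i s) (j s)

theorem norm_tp_le (k : ℕ) (i j : Fin k → Fin n) (M : Matrix.unitaryGroup (Fin n) ℂ) :
    ‖tp k (M : Matrix (Fin n) (Fin n) ℂ) i j‖ ≤ 1 := by
  simp only [tp, norm_prod]
  exact Finset.prod_le_one (fun _ _ => norm_nonneg _)
    fun s _ => entry_norm_bound_of_unitary M.2 _ _

theorem integrable_conj (k : ℕ) (X : Matrix (Fin k → Fin n) (Fin k → Fin n) ℂ) (i j) :
    Integrable (fun M : Matrix.unitaryGroup (Fin n) ℂ =>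
      (tp k (M : Matrix (Fin n) (Fin n) ℂ) * X *
        (tp k (M : Matrix (Fin n) (Fin n) ℂ)).conjTranspose) i j) μ := by
  simp only [Matrix.mul_apply, Matrix.conjTranspose_apply, Finset.sum_mul]
  refine integrable_finsetSum _ fun a _ => integrable_finsetSum _ fun b _ => ?_
  refine Integrable.of_bound (C := ‖X b a‖) (Continuous.aestronglyMeasurable ?_) ?_
  · exact ((continuous_tp k _ _).mul continuous_const).mul (continuous_tp k _ _).star
  · refine Filter.Eventually.of_forall fun M => ?_
    rw [norm_mul, norm_mul, norm_star]
    have h1 := norm_tp_le k i b M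
    have h2 := norm_tp_le k j a M
    have h3 := norm_nonneg (X b a)
    calc _ ≤ 1 * ‖X b a‖ * 1 := by gcongr
      _ = _ := by ring

/-- Averaging over the unitary group. -/
noncomputable def avg (k : ℕ) : Matrix (Fin k → Fin n) (Fin k → Fin n) ℂ →ₗ[ℂ]
    Matrix (Fin k → Fin n) (Fin k → Fin n) ℂ where
  toFun X := fun i j => ∫ M : Matrix.unitaryGroup (Fin n) ℂ,
    (tp k (M : Matrix (Fin n) (Fin n) ℂ) * X *
        (tp k (M : Matrix (Fin n) (Fin n) ℂ)).conjTranspose) i j ∂μ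
  map_add' X Y := by
    ext i j
    simp only [mul_add, add_mul, Matrix.add_apply]
    exact integral_add (integrable_conj μ k X i j) (integrable_conj μ k Y i j)
  map_smul' c X := by
    ext i j
    simp only [Matrix.mul_smul, Matrix.smul_mul, Matrix.smul_apply, RingHom.id_apply]
    exact integral_smul c _

theorem avg_apply (k : ℕ) (X : Matrix (Fin k → Fin n) (Fin k → Fin n) ℂ) (i j) :
    avg μ k X i j = ∫ M : Matrix.unitaryGroup (Fin n) ℂ,
    (tp k (M : Matrix (Fin n) (Fin n) ℂ) * X *
        (tp k (M : Matrix (Fin n) (Fin n) ℂ)).conjTranspose) i j ∂μ := rfl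

theorem tp_unitary (k : ℕ) (M : Matrix.unitaryGroup (Fin n) ℂ) :
    tp k (M : Matrix (Fin n) (Fin n) ℂ) *
      (tp k (M : Matrix (Fin n) (Fin n) ℂ)).conjTranspose = 1 := by
  rw [← tp_conjTranspose, ← tp_mul, ← Matrix.star_eq_conjTranspose,
    Matrix.mem_unitaryGroup_iff.1 M.2, tp_one]

theorem tp_unitary' (k : ℕ) (M : Matrix.unitaryGroup (Fin n) ℂ) :
    (tp k (M : Matrix (Fin n) (Fin n) ℂ)).conjTranspose *
      tp k (M : Matrix (Fin n) (Fin n) ℂ) = 1 := by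
  rw [← tp_conjTranspose, ← tp_mul, ← Matrix.star_eq_conjTranspose,
    Matrix.mem_unitaryGroup_iff'.1 M.2, tp_one]

theorem avg_isProj (k : ℕ) : LinearMap.IsProj (spanRho n k) (avg μ k) := by
  constructor
  · intro X
    rw [schur_weyl]
    intro N hN
    lift N to Matrix.unitaryGroup (Fin n) ℂ using hN
    ext i j
    rw [Matrix.mul_apply, Matrix.mul_apply]
    simp only [avg_apply]
    simp only [← integral_const_mul, ← integral_mul_const]
    rw [← integral_finsetSum _ fun l _ => (integrable_conj μ k X l j).const_mul _,
      ← integral_finsetSum _ fun l _ => (integrable_conj μ k X i l).mul_const _]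
    simp only [← Matrix.mul_apply]
    symm
    rw [← integral_mul_left_eq_self _ N]
    congr 1
    ext M
    rw [Submonoid.coe_mul, tp_mul, Matrix.conjTranspose_mul]
    simp only [mul_assoc]
    rw [tp_unitary', mul_one]
  · intro X hX
    rw [schur_weyl] at hX
    ext i j
    rw [avg_apply]
    have : ∀ M : Matrix.unitaryGroup (Fin n) ℂ,
        tp k (M : Matrix (Fin n) (Fin n) ℂ) * X *
          (tp k (M : Matrix (Fin n) (Fin n) ℂ)).conjTranspose = X := by
      intro M
      rw [hX _ M.2, mul_assoc, tp_unitary, mul_one]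
    simp [this]

theorem trace_avg (k : ℕ) : LinearMap.trace ℂ _ (avg μ k) =
    ∫ M : Matrix.unitaryGroup (Fin n) ℂ,
      (Matrix.trace (M : Matrix (Fin n) (Fin n) ℂ)) ^ k *
        ((starRingEnd ℂ) (Matrix.trace (M : Matrix (Fin n) (Fin n) ℂ))) ^ k ∂μ := by
  have key : ∀ i j, avg μ k (Matrix.single i j 1) i j =
      ∫ M : Matrix.unitaryGroup (Fin n) ℂ, tp k (M : Matrix (Fin n) (Fin n) ℂ) i i *
        (starRingEnd ℂ) (tp k (M : Matrix (Fin n) (Fin n) ℂ) j j) ∂μ := by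
    intro i j
    rw [avg_apply]
    congr 1
    ext M
    exact single_key _ i j
  have hIntg : ∀ i j, Integrable (fun M : Matrix.unitaryGroup (Fin n) ℂ =>
      tp k (M : Matrix (Fin n) (Fin n) ℂ) i i *
        (starRingEnd ℂ) (tp k (M : Matrix (Fin n) (Fin n) ℂ) j j)) μ := by
    intro i j
    have := integrable_conj μ k (Matrix.single i j 1) i j
    simpa only [single_key] using this
  rw [LinearMap.trace_eq_matrix_trace ℂ (Matrix.stdBasis ℂ _ _), Matrix.trace,
    Fintype.sum_prod_type]
  have h2 : ∀ i j, (LinearMap.toMatrix (Matrix.stdBasis ℂ (Fin k → Fin n) (Fin k → Fin n))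
      (Matrix.stdBasis ℂ (Fin k → Fin n) (Fin k → Fin n)) (avg μ k)).diag (i, j) =
      avg μ k (Matrix.single i j 1) i j := by
    intro i j
    rw [Matrix.diag_apply, LinearMap.toMatrix_apply, Matrix.stdBasis_eq_single]
    rfl
  simp only [h2, key]
  simp only [← integral_finsetSum _ fun j _ => hIntg _ j]
  rw [← integral_finsetSum _ fun i _ => integrable_finsetSum _ fun j _ => hIntg i j]
  congr 1
  ext M
  rw [← map_pow, ← trace_tp, Matrix.trace, map_sum, Finset.sum_mul_sum]
  rfl

theorem integral_diag (k : ℕ) :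
    ∫ M : Matrix.unitaryGroup (Fin n) ℂ,
      (Matrix.trace (M : Matrix (Fin n) (Fin n) ℂ)) ^ k *
        ((starRingEnd ℂ) (Matrix.trace (M : Matrix (Fin n) (Fin n) ℂ))) ^ k ∂μ =
    (Nat.card {π : Equiv.Perm (Fin k) // lis π ≤ n} : ℂ) := by
  rw [← trace_avg, (avg_isProj μ k).trace, finrank_spanRho]

theorem integral_offdiag (a b : ℕ) (hab : a ≠ b) :
    ∫ M : Matrix.unitaryGroup (Fin n) ℂ,
      (Matrix.trace (M : Matrix (Fin n) (Fin n) ℂ)) ^ a *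
        ((starRingEnd ℂ) (Matrix.trace (M : Matrix (Fin n) (Fin n) ℂ))) ^ b ∂μ = 0 := by
  let θ : ℝ := Real.pi / ((a : ℝ) - b)
  let z : ℂ := Complex.exp (θ * Complex.I)
  have hconj : (starRingEnd ℂ) z = Complex.exp (-(θ * Complex.I)) := by
    simp only [z]
    rw [← Complex.exp_conj]
    simp
  have hzz : z * (starRingEnd ℂ) z = 1 := by
    rw [hconj, ← Complex.exp_add]; simp
  have hz : z ^ a * (starRingEnd ℂ) z ^ b = -1 := by
    rw [hconj, ← Complex.exp_nat_mul, ← Complex.exp_nat_mul, ← Complex.exp_add,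
      ← Complex.exp_pi_mul_I]
    congr 1
    have hne : (a : ℂ) - b ≠ 0 := by
      rw [sub_ne_zero]; exact_mod_cast hab
    simp only [θ]
    push_cast
    field_simp
    ring
  let Z : Matrix.unitaryGroup (Fin n) ℂ := ⟨z • 1, by
    rw [Matrix.mem_unitaryGroup_iff, star_smul, star_one, smul_mul_smul_comm, mul_one]
    change (z * (starRingEnd ℂ) z) • _ = _
    rw [hzz, one_smul]⟩
  have h1 := integral_mul_left_eq_self (μ := μ) (fun M : Matrix.unitaryGroup (Fin n) ℂ =>
      (Matrix.trace (M : Matrix (Fin n) (Fin n) ℂ)) ^ a *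
        ((starRingEnd ℂ) (Matrix.trace (M : Matrix (Fin n) (Fin n) ℂ))) ^ b) Z
  have h2 : ∀ M : Matrix.unitaryGroup (Fin n) ℂ,
      (Matrix.trace ((Z * M : Matrix.unitaryGroup (Fin n) ℂ) : Matrix (Fin n) (Fin n) ℂ)) ^ a *
        ((starRingEnd ℂ) (Matrix.trace ((Z * M : Matrix.unitaryGroup (Fin n) ℂ) :
          Matrix (Fin n) (Fin n) ℂ))) ^ b =
      -((Matrix.trace (M : Matrix (Fin n) (Fin n) ℂ)) ^ a *
        ((starRingEnd ℂ) (Matrix.trace (M : Matrix (Fin n) (Fin n) ℂ))) ^ b) := by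
    intro M
    have : ((Z * M : Matrix.unitaryGroup (Fin n) ℂ) : Matrix (Fin n) (Fin n) ℂ) = z • M.1 := by
      rw [Submonoid.coe_mul]
      simp [Z]
    rw [this, Matrix.trace_smul, smul_eq_mul, map_mul, mul_pow, mul_pow, mul_mul_mul_comm, hz]
    ring
  simp only [h2, integral_neg] at h1
  exact self_eq_neg.mp h1.symm

theorem integrable_moment (a b : ℕ) :
    Integrable (fun M : Matrix.unitaryGroup (Fin n) ℂ =>
      (Matrix.trace (M : Matrix (Fin n) (Fin n) ℂ)) ^ a *
        ((starRingEnd ℂ) (Matrix.trace (M : Matrix (Fin n) (Fin n) ℂ))) ^ b) μ := by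
  have hc : Continuous (fun M : Matrix.unitaryGroup (Fin n) ℂ =>
      Matrix.trace (M : Matrix (Fin n) (Fin n) ℂ)) :=
    continuous_subtype_val.matrix_trace
  have hn : ∀ M : Matrix.unitaryGroup (Fin n) ℂ,
      ‖Matrix.trace (M : Matrix (Fin n) (Fin n) ℂ)‖ ≤ n := by
    intro M
    refine (norm_sum_le _ _).trans ?_
    refine (Finset.sum_le_sum fun i _ => entry_norm_bound_of_unitary M.2 i i).trans ?_
    simp
  refine Integrable.of_bound (C := (n : ℝ) ^ a * (n : ℝ) ^ b)
    (Continuous.aestronglyMeasurable ?_) ?_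
  · exact (hc.pow a).mul ((Complex.continuous_conj.comp hc).pow b)
  · refine Filter.Eventually.of_forall fun M => ?_
    rw [norm_mul, norm_pow, norm_pow, RCLike.norm_conj]
    have := hn M
    gcongr

end integral

end Gessel

/-- Gessel's identity (finite form): the number of permutations `π ∈ S_k` with longest
increasing subsequence of length at most `n` (equivalently, of pairs of same-shape
standard Young tableaux with `k` boxes and at most `n` columns) is given by
`C(2k,k)⁻¹ ∫_{U(n)} (Tr(M + M̄))^{2k} dM`, `dM` normalized Haar measure on `U(n)`. -/
theorem card_lis_le_eq_unitary_moment (n k : ℕ)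
    [MeasurableSpace (Matrix.unitaryGroup (Fin n) ℂ)]
    [BorelSpace (Matrix.unitaryGroup (Fin n) ℂ)]
    (μ : Measure (Matrix.unitaryGroup (Fin n) ℂ))
    [μ.IsHaarMeasure] [IsProbabilityMeasure μ] :
    (Nat.card {π : Equiv.Perm (Fin k) // lis π ≤ n} : ℂ) =
      ((Nat.choose (2 * k) k : ℂ))⁻¹ *
        ∫ M : Matrix.unitaryGroup (Fin n) ℂ,
          (Matrix.trace (M : Matrix (Fin n) (Fin n) ℂ) +
            (starRingEnd ℂ) (Matrix.trace (M : Matrix (Fin n) (Fin n) ℂ))) ^ (2 * k) ∂μ := by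
  have hne : (Nat.choose (2 * k) k : ℂ) ≠ 0 := by
    exact_mod_cast (Nat.choose_pos (by omega)).ne'
  rw [eq_inv_mul_iff_mul_eq₀ hne]
  simp only [add_pow]
  rw [integral_finsetSum _ fun m _ => (Gessel.integrable_moment μ m (2 * k - m)).mul_const _]
  simp only [integral_mul_const]
  rw [Finset.sum_eq_single k]
  · rw [show 2 * k - k = k by omega, Gessel.integral_diag, mul_comm]
  · intro m _ hm
    rw [Gessel.integral_offdiag μ _ _ (by omega), zero_mul]
  · intro h
    exact absurd (Finset.mem_range.2 (by omega)) h
end
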